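/- arXiv:2106.08293 — 6 statements merged into one kernel-verified Lean document; each statement's English description precedes it below -/
import Mathlib

section
/- For every integer n ≥ 1 and every pair of matrices A₊ ∈ O⁺(n), A₋ ∈ O⁻(n), the Frobenius distance satisfies ‖A₊ − A₋‖ ≥ 2, and equality ‖A₊ − A₋‖ = 2 holds if and only if there exists a unit vector 𝐧 ∈ ℝⁿ such that A₋ = A₊(I − 2𝐧𝐧ᵀ). Consequently, the minimum of ‖A − B‖ over all (A, B) ∈ O⁺(n) × O⁻(n) equals 2. -/
/-!
Since `Apᵀ (Ap + Am) Amᵀ = (Ap + Am)ᵀ`, taking determinants gives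
`det (Ap + Am) = -det (Ap + Am)`, so `Ap + Am` is singular and there is a unit vector `v` with
`Am v = -Ap v` (`exists_unit_mulVec_eq_neg`). Put `w = Ap v`, again a unit
vector, and `E = (Ap - Am) - 2 w vᵀ = Ap (I - 2 v vᵀ) - Am`. Then `E v = 0`, so `E` is
Frobenius-orthogonal to `w vᵀ` and
`‖Ap - Am‖² = ‖E‖² + 4` (`sum_sq_add_rank_one`). This gives the lower bound, with equality only
if `E = 0`, that is `Am = Ap (I - 2 v vᵀ)`. The converse is the case `E = 0` of the same identity,
and applying it to `Ap` and `Ap (I - 2 v vᵀ)` shows that the minimum is attained.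
-/

open Matrix

noncomputable def frobNorm {n : ℕ} (A : Matrix (Fin n) (Fin n) ℝ) : ℝ :=
  Real.sqrt (∑ i, ∑ j, (A i j) ^ 2)

/-- If `v`, `w` are unit vectors and `E v = 0`, then `‖E + 2 w vᵀ‖² = ‖E‖² + 4`. -/
lemma sum_sq_add_rank_one {n : ℕ} (E : Matrix (Fin n) (Fin n) ℝ) (v w : Fin n → ℝ)
    (hv : ∑ i, v i ^ 2 = 1) (hw : ∑ i, w i ^ 2 = 1) (hE : E *ᵥ v = 0) :
    ∑ i, ∑ j, (E + (2 : ℝ) • vecMulVec w v) i j ^ 2 = (∑ i, ∑ j, E i j ^ 2) + 4 := by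
  have hrow : ∀ i, ∑ j, (E + (2 : ℝ) • vecMulVec w v) i j ^ 2
      = (∑ j, E i j ^ 2) + 4 * w i ^ 2 := by
    intro i
    have h0 : ∑ j, E i j * v j = 0 := by
      simpa [mulVec, dotProduct] using congrFun hE i
    calc ∑ j, (E + (2 : ℝ) • vecMulVec w v) i j ^ 2
        = ∑ j, (E i j ^ 2 + 4 * w i * (E i j * v j) + 4 * w i ^ 2 * v j ^ 2) := by
          refine Finset.sum_congr rfl fun j _ => ?_
          simp only [Matrix.add_apply, Matrix.smul_apply, vecMulVec_apply, smul_eq_mul]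
          ring
      _ = _ := by
          rw [Finset.sum_add_distrib, Finset.sum_add_distrib, ← Finset.mul_sum,
            ← Finset.mul_sum, h0, hv]
          ring
  rw [Finset.sum_congr rfl fun i _ => hrow i, Finset.sum_add_distrib, ← Finset.mul_sum, hw]
  ring

lemma sum_sq_eq_dotProduct {n : ℕ} (v : Fin n → ℝ) : ∑ i, v i ^ 2 = v ⬝ᵥ v := by
  simp [dotProduct, sq]

lemma sum_sq_mulVec {n : ℕ} (A : Matrix (Fin n) (Fin n) ℝ) (hA : Aᵀ * A = 1) (v : Fin n → ℝ) :
    ∑ i, (A *ᵥ v) i ^ 2 = ∑ i, v i ^ 2 := by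
  rw [sum_sq_eq_dotProduct, sum_sq_eq_dotProduct, dotProduct_mulVec, ← mulVec_transpose,
    mulVec_mulVec, hA, one_mulVec]

/-- Two orthogonal matrices of opposite determinant are opposite on some unit vector. -/
lemma exists_unit_mulVec_eq_neg {n : ℕ} (Ap Am : Matrix (Fin n) (Fin n) ℝ)
    (hApO : Apᵀ * Ap = 1) (hApdet : Ap.det = 1)
    (hAmO : Amᵀ * Am = 1) (hAmdet : Am.det = -1) :
    ∃ v : Fin n → ℝ, ∑ i, v i ^ 2 = 1 ∧ Am *ᵥ v = -(Ap *ᵥ v) := by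
  have hAmO' : Am * Amᵀ = 1 := mul_eq_one_comm.mp hAmO
  have hT : Apᵀ * (Ap + Am) * Amᵀ = (Ap + Am)ᵀ := by
    rw [mul_add, hApO, add_mul, one_mul, Matrix.mul_assoc, hAmO', mul_one, transpose_add, add_comm]
  have hd : (Ap + Am).det = 0 := by
    have h := congrArg det hT
    rw [det_mul, det_mul, det_transpose, det_transpose, det_transpose, hApdet, hAmdet] at h
    linarith
  obtain ⟨u, hu0, hu⟩ := exists_mulVec_eq_zero_iff.mpr hd
  have hpos : 0 < u ⬝ᵥ u :=
    lt_of_le_of_ne (by rw [← sum_sq_eq_dotProduct]; positivity)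
      (fun h => hu0 (dotProduct_self_eq_zero.mp h.symm))
  refine ⟨(Real.sqrt (u ⬝ᵥ u))⁻¹ • u, ?_, ?_⟩
  · rw [sum_sq_eq_dotProduct, smul_dotProduct, dotProduct_smul, smul_eq_mul, smul_eq_mul,
      ← mul_assoc, ← mul_inv, Real.mul_self_sqrt hpos.le, inv_mul_cancel₀ hpos.ne']
  · rw [add_mulVec] at hu
    rw [mulVec_smul, mulVec_smul, ← smul_neg, eq_neg_of_add_eq_zero_right hu]

lemma sqrt_four : Real.sqrt 4 = 2 := by
  rw [show (4 : ℝ) = 2 ^ 2 by norm_num]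
  exact Real.sqrt_sq (by norm_num)

lemma mul_reflection {n : ℕ} (A : Matrix (Fin n) (Fin n) ℝ) (v : Fin n → ℝ) :
    A * (1 - (2 : ℝ) • vecMulVec v v) = A - (2 : ℝ) • vecMulVec (A *ᵥ v) v := by
  rw [mul_sub, mul_one, mul_smul_comm, mul_vecMulVec]

lemma frobNorm_sub_reflection {n : ℕ} (A : Matrix (Fin n) (Fin n) ℝ) (hA : Aᵀ * A = 1)
    (v : Fin n → ℝ) (hv : ∑ i, v i ^ 2 = 1) :
    frobNorm (A - A * (1 - (2 : ℝ) • vecMulVec v v)) = 2 := by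
  have h := sum_sq_add_rank_one 0 v (A *ᵥ v) hv ((sum_sq_mulVec A hA v).trans hv) (zero_mulVec v)
  rw [mul_reflection, sub_sub_cancel, frobNorm]
  refine Eq.trans (congrArg Real.sqrt ?_) sqrt_four
  simpa using h

/-- The Pythagorean identity `‖Ap - Am‖² = ‖E‖² + 4` for a suitable unit vector `v`, where
`E = Ap (I - 2 v vᵀ) - Am`. -/
lemma exists_pythagoras {n : ℕ} (Ap Am : Matrix (Fin n) (Fin n) ℝ)
    (hApO : Apᵀ * Ap = 1) (hApdet : Ap.det = 1)
    (hAmO : Amᵀ * Am = 1) (hAmdet : Am.det = -1) :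
    ∃ v : Fin n → ℝ, ∑ i, v i ^ 2 = 1 ∧ ∑ i, ∑ j, (Ap - Am) i j ^ 2
      = (∑ i, ∑ j, (Ap * (1 - (2 : ℝ) • vecMulVec v v) - Am) i j ^ 2) + 4 := by
  obtain ⟨v, hv, hneg⟩ := exists_unit_mulVec_eq_neg Ap Am hApO hApdet hAmO hAmdet
  refine ⟨v, hv, ?_⟩
  have hM : Ap - Am = (Ap * (1 - (2 : ℝ) • vecMulVec v v) - Am)
      + (2 : ℝ) • vecMulVec (Ap *ᵥ v) v := by
    rw [mul_reflection]
    abel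
  rw [hM, sum_sq_add_rank_one _ v (Ap *ᵥ v) hv ((sum_sq_mulVec Ap hApO v).trans hv)]
  have hvv : v ⬝ᵥ v = 1 := by rw [← sum_sq_eq_dotProduct, hv]
  rw [mul_reflection, sub_mulVec, sub_mulVec, smul_mulVec, vecMulVec_mulVec, hvv, hneg]
  ext i
  simp
  ring

lemma two_le_frobNorm_sub {n : ℕ} (Ap Am : Matrix (Fin n) (Fin n) ℝ)
    (hApO : Apᵀ * Ap = 1) (hApdet : Ap.det = 1)
    (hAmO : Amᵀ * Am = 1) (hAmdet : Am.det = -1) : 2 ≤ frobNorm (Ap - Am) := by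
  obtain ⟨v, -, h⟩ := exists_pythagoras Ap Am hApO hApdet hAmO hAmdet
  rw [frobNorm, h, ← sqrt_four]
  exact Real.sqrt_le_sqrt (le_add_of_nonneg_left (by positivity))

lemma reflection_orthogonal {n : ℕ} (v : Fin n → ℝ) (hv : ∑ i, v i ^ 2 = 1) :
    (1 - (2 : ℝ) • vecMulVec v v)ᵀ * (1 - (2 : ℝ) • vecMulVec v v) = 1 := by
  have hvv : v ⬝ᵥ v = 1 := by rw [← sum_sq_eq_dotProduct, hv]
  have hP : vecMulVec v v * vecMulVec v v = vecMulVec v v := by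
    rw [vecMulVec_mul_vecMulVec, hvv, one_smul]
  rw [transpose_sub, transpose_one, transpose_smul, transpose_vecMulVec, sub_mul, mul_sub, mul_sub,
    smul_mul_smul_comm, hP, one_mul, one_mul, mul_one]
  module

lemma det_reflection {n : ℕ} (v : Fin n → ℝ) (hv : ∑ i, v i ^ 2 = 1) :
    (1 - (2 : ℝ) • vecMulVec v v).det = -1 := by
  have hvv : v ⬝ᵥ v = 1 := by rw [← sum_sq_eq_dotProduct, hv]
  have h := det_one_add_replicateCol_mul_replicateRow (ι := Unit) ((-2 : ℝ) • v) v
  rw [← vecMulVec_eq, smul_vecMulVec, dotProduct_smul, hvv, neg_smul, ← sub_eq_add_neg] at h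
  rw [h]
  norm_num

/-- For every `n ≥ 1` and `A₊ ∈ O⁺(n)`, `A₋ ∈ O⁻(n)`, the Frobenius distance satisfies
`‖A₊ − A₋‖ ≥ 2`, with equality iff `A₋ = A₊(I − 2nnᵀ)` for some unit vector `n`; and the
minimum of `‖A − B‖` over `O⁺(n) × O⁻(n)` equals `2`. -/
theorem stmt0 (n : ℕ) (hn : 1 ≤ n)
    (Ap Am : Matrix (Fin n) (Fin n) ℝ)
    (hApO : Apᵀ * Ap = 1) (hApdet : Ap.det = 1)
    (hAmO : Amᵀ * Am = 1) (hAmdet : Am.det = -1) :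
    2 ≤ frobNorm (Ap - Am) ∧
    (frobNorm (Ap - Am) = 2 ↔
      ∃ v : Fin n → ℝ, (∑ i, v i ^ 2) = 1 ∧
        Am = Ap * (1 - (2 : ℝ) • vecMulVec v v)) ∧
    IsLeast {r : ℝ | ∃ A B : Matrix (Fin n) (Fin n) ℝ,
        Aᵀ * A = 1 ∧ A.det = 1 ∧ Bᵀ * B = 1 ∧ B.det = -1 ∧ r = frobNorm (A - B)} 2 := by
  obtain ⟨v, hv, h⟩ := exists_pythagoras Ap Am hApO hApdet hAmO hAmdet
  refine ⟨two_le_frobNorm_sub Ap Am hApO hApdet hAmO hAmdet, ⟨fun h2 => ⟨v, hv, ?_⟩, ?_⟩, ?_, ?_⟩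
  · rw [frobNorm, h, Real.sqrt_eq_iff_mul_self_eq (by positivity) (by norm_num)] at h2
    have h0 : ∑ i, ∑ j, (Ap * (1 - (2 : ℝ) • vecMulVec v v) - Am) i j ^ 2 = 0 := by linarith
    rw [Finset.sum_eq_zero_iff_of_nonneg fun i _ => by positivity] at h0
    refine (sub_eq_zero.mp (Matrix.ext fun i j => ?_)).symm
    have hi := h0 i (Finset.mem_univ i)
    rw [Finset.sum_eq_zero_iff_of_nonneg fun j _ => by positivity] at hi
    exact pow_eq_zero_iff two_ne_zero |>.mp (hi j (Finset.mem_univ j))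
  · rintro ⟨u, hu, rfl⟩
    exact frobNorm_sub_reflection Ap hApO u hu
  · refine ⟨Ap, Ap * (1 - (2 : ℝ) • vecMulVec v v), hApO, hApdet, ?_, ?_,
      (frobNorm_sub_reflection Ap hApO v hv).symm⟩
    · rw [transpose_mul, Matrix.mul_assoc, ← Matrix.mul_assoc Apᵀ, hApO, one_mul,
        reflection_orthogonal v hv]
    · rw [det_mul, hApdet, det_reflection v hv, one_mul]
  · rintro r ⟨A, B, hA, hA1, hB, hB1, rfl⟩
    exact two_le_frobNorm_sub A B hA hA1 hB hB1
end

section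
/- Let A be an n×n real matrix and let ρ = inf{‖A − B‖ : B ∈ O(n)} be its Frobenius distance to the orthogonal group. If ρ ≤ 1, then F(A) ≥ ¼ρ²(2−ρ)², where F(A) = ¼‖AᵀA − I‖². Moreover, for any unit vector 𝐧 ∈ ℝⁿ, the matrix A = I − ρ𝐧𝐧ᵀ satisfies F(I − ρ𝐧𝐧ᵀ) = ¼ρ²(2−ρ)². -/
/-!
The lower bound depends only on the singular values `d i` of `A`. Writing `A V = U D` with `U, V`
orthogonal and `D = diag d`, `d ≥ 0` (`exists_svd`), one has `4 F(A) = ∑ (d i ^ 2 - 1) ^ 2`, and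
the orthogonal matrix `U Vᵀ` shows `ρ ^ 2 ≤ ∑ (d i - 1) ^ 2`; optimality of `U Vᵀ` is never needed.
What remains is the scalar inequality `sum_sq_bound`: with `e i = d i - 1 ≥ -1`, the left side is
`∑ e i ^ 2 (2 + e i) ^ 2`. If every `e i ≥ -ρ`, each factor `(2 + e i) ^ 2` is at least
`(2 - ρ) ^ 2`; otherwise a single term with `-1 ≤ e i < -ρ` suffices, because `x (2 - x)` is
increasing on `[0, 1]`.
The equality case follows from `(I - ρ v vᵀ)ᵀ (I - ρ v vᵀ) - I = -ρ (2 - ρ) v vᵀ`.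
-/

open Matrix

/-- The Allen–Cahn potential `F(A) = ¼‖AᵀA − I‖²`. -/
noncomputable def acF {n : ℕ} (A : Matrix (Fin n) (Fin n) ℝ) : ℝ :=
  (1 / 4) * (frobNorm (Aᵀ * A - 1)) ^ 2

lemma frobNorm_sq {n : ℕ} (A : Matrix (Fin n) (Fin n) ℝ) :
    frobNorm A ^ 2 = ∑ i, ∑ j, (A i j) ^ 2 :=
  Real.sq_sqrt (Finset.sum_nonneg fun _ _ => Finset.sum_nonneg fun _ _ => sq_nonneg _)

lemma frobNorm_sq_eq_trace {n : ℕ} (A : Matrix (Fin n) (Fin n) ℝ) :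
    frobNorm A ^ 2 = trace (Aᵀ * A) := by
  rw [frobNorm_sq, Finset.sum_comm]
  simp [trace, mul_apply, sq]

lemma frobNorm_sq_orthogonal_mul {n : ℕ} (U A : Matrix (Fin n) (Fin n) ℝ) (hU : Uᵀ * U = 1) :
    frobNorm (U * A) ^ 2 = frobNorm A ^ 2 := by
  rw [frobNorm_sq_eq_trace, frobNorm_sq_eq_trace, transpose_mul, Matrix.mul_assoc,
    ← Matrix.mul_assoc Uᵀ, hU, Matrix.one_mul]

lemma frobNorm_sq_mul_orthogonal {n : ℕ} (A V : Matrix (Fin n) (Fin n) ℝ) (hV : V * Vᵀ = 1) :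
    frobNorm (A * V) ^ 2 = frobNorm A ^ 2 := by
  rw [frobNorm_sq_eq_trace, frobNorm_sq_eq_trace, transpose_mul, trace_mul_comm,
    Matrix.mul_assoc, ← Matrix.mul_assoc V, hV, Matrix.one_mul, trace_mul_comm]

lemma frobNorm_sq_diagonal {n : ℕ} (d : Fin n → ℝ) :
    frobNorm (diagonal d) ^ 2 = ∑ i, d i ^ 2 := by
  rw [frobNorm_sq_eq_trace]
  simp [trace, sq]

/-- A singular value decomposition. `V` diagonalizes `Aᵀ A`, so the columns of `A V` are pairwise
orthogonal; the nonzero ones are normalized and completed to an orthonormal basis, which gives the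
columns of `U`. -/
lemma exists_svd {n : ℕ} (A : Matrix (Fin n) (Fin n) ℝ) :
    ∃ (U V : Matrix (Fin n) (Fin n) ℝ) (d : Fin n → ℝ),
      Uᵀ * U = 1 ∧ Vᵀ * V = 1 ∧ (∀ i, 0 ≤ d i) ∧ A * V = U * diagonal d := by
  have hH : (Aᵀ * A).IsHermitian := by
    simp [IsHermitian, conjTranspose_eq_transpose_of_trivial]
  obtain ⟨V, l, hV, hl⟩ : ∃ (V : Matrix (Fin n) (Fin n) ℝ) (l : Fin n → ℝ),
      Vᵀ * V = 1 ∧ Aᵀ * A = V * diagonal l * Vᵀ := by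
    refine ⟨hH.eigenvectorUnitary, hH.eigenvalues, ?_, ?_⟩
    · have := Unitary.coe_star_mul_self hH.eigenvectorUnitary
      simpa [star_eq_conjTranspose, conjTranspose_eq_transpose_of_trivial] using this
    · have := hH.spectral_theorem
      simpa [Unitary.conjStarAlgAut_apply, star_eq_conjTranspose,
        conjTranspose_eq_transpose_of_trivial, Function.comp_def] using this
  set M := A * V with hM
  have hMM : Mᵀ * M = diagonal l := by
    calc Mᵀ * M = Vᵀ * (Aᵀ * A) * V := by simp only [hM, transpose_mul, Matrix.mul_assoc]
      _ = (Vᵀ * V) * diagonal l * (Vᵀ * V) := by rw [hl]; simp only [Matrix.mul_assoc]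
      _ = diagonal l := by rw [hV]; simp
  have hcol : ∀ i j, ∑ k, M k i * M k j = if i = j then l i else 0 := by
    intro i j
    have := congrFun (congrFun hMM i) j
    simpa [mul_apply, diagonal_apply] using this
  have hl0 : ∀ i, 0 ≤ l i := by
    intro i
    have := hcol i i
    rw [if_pos rfl] at this
    rw [← this]
    exact Finset.sum_nonneg fun _ _ => mul_self_nonneg _
  let d : Fin n → ℝ := fun i => √(l i)
  have hdd : ∀ i, d i * d i = l i := fun i => Real.mul_self_sqrt (hl0 i)
  let u : Fin n → EuclideanSpace ℝ (Fin n) := fun i => WithLp.toLp 2 fun k => (d i)⁻¹ * M k i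
  let s : Set (Fin n) := {i | d i ≠ 0}
  have hu : Orthonormal ℝ (s.domRestrict u) := by
    rw [orthonormal_iff_ite]
    rintro ⟨i, hi⟩ ⟨j, hj⟩
    have h1 : inner ℝ (u i) (u j) = (d i)⁻¹ * (d j)⁻¹ * ∑ k, M k i * M k j := by
      simp only [u, PiLp.inner_apply, Finset.mul_sum, RCLike.inner_apply, conj_trivial]
      exact Finset.sum_congr rfl fun k _ => by ring
    change inner ℝ (u i) (u j) = _
    rw [h1, hcol]
    simp only [Subtype.mk.injEq]
    split_ifs with h
    · subst h
      have : d i ≠ 0 := hi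
      rw [← hdd]
      field_simp
    · simp
  obtain ⟨b, hb⟩ := hu.exists_orthonormalBasis_extension_of_card_eq (by simp)
  refine ⟨of fun k i => b i k, V, d, ?_, hV, fun i => Real.sqrt_nonneg _, ?_⟩
  · ext i j
    have := orthonormal_iff_ite.1 b.orthonormal i j
    rw [mul_apply, one_apply, ← this, PiLp.inner_apply]
    exact Finset.sum_congr rfl fun k _ => by simp [mul_comm]
  · ext k i
    rw [mul_diagonal, of_apply]
    by_cases h : d i = 0
    · -- A zero singular value forces the whole column `M · i` to vanish.
      have h2 : ∑ k, M k i * M k i = 0 := by rw [hcol, if_pos rfl, ← hdd, h, zero_mul]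
      rw [Finset.sum_eq_zero_iff_of_nonneg fun _ _ => mul_self_nonneg _] at h2
      rw [h, mul_zero]
      exact mul_self_eq_zero.1 (h2 k (Finset.mem_univ k))
    · rw [hb i h]
      change M k i = (d i)⁻¹ * M k i * d i
      field_simp

/-- The scalar form of the lower bound, with `d` in the role of the singular values. -/
lemma sum_sq_bound {n : ℕ} (d : Fin n → ℝ) (hd : ∀ i, 0 ≤ d i) (ρ : ℝ) (h0 : 0 ≤ ρ)
    (h1 : ρ ≤ 1) (h : ρ ^ 2 ≤ ∑ i, (d i - 1) ^ 2) :
    ρ ^ 2 * (2 - ρ) ^ 2 ≤ ∑ i, (d i ^ 2 - 1) ^ 2 := by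
  by_cases hall : ∀ i, 1 - ρ ≤ d i
  · calc ρ ^ 2 * (2 - ρ) ^ 2 ≤ (∑ i, (d i - 1) ^ 2) * (2 - ρ) ^ 2 := by gcongr
      _ = ∑ i, (d i - 1) ^ 2 * (2 - ρ) ^ 2 := Finset.sum_mul _ _ _
      _ ≤ ∑ i, (d i - 1) ^ 2 * (d i + 1) ^ 2 := by
        refine Finset.sum_le_sum fun i _ => ?_
        have := hall i
        gcongr
        all_goals linarith
      _ = ∑ i, (d i ^ 2 - 1) ^ 2 := Finset.sum_congr rfl fun i _ => by ring
  · push Not at hall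
    obtain ⟨i, hi⟩ := hall
    have h2 : ρ * (2 - ρ) ≤ 1 - d i ^ 2 := by nlinarith [hd i]
    have h3 : 0 ≤ ρ * (2 - ρ) := mul_nonneg h0 (by linarith)
    calc ρ ^ 2 * (2 - ρ) ^ 2 = (ρ * (2 - ρ)) ^ 2 := by ring
      _ ≤ (1 - d i ^ 2) ^ 2 := by gcongr
      _ = (d i ^ 2 - 1) ^ 2 := by ring
      _ ≤ ∑ i, (d i ^ 2 - 1) ^ 2 :=
        Finset.single_le_sum (f := fun i => (d i ^ 2 - 1) ^ 2)
          (fun _ _ => sq_nonneg _) (Finset.mem_univ i)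

/-- If `ρ` is the Frobenius distance from `A` to the orthogonal group and `ρ ≤ 1`, then
`F(A) ≥ ¼ρ²(2−ρ)²`; moreover, for any unit vector `n`, `F(I − ρnnᵀ) = ¼ρ²(2−ρ)²`. -/
theorem stmt1 (n : ℕ) (A : Matrix (Fin n) (Fin n) ℝ) (ρ : ℝ)
    (hρ : ρ = sInf {r : ℝ | ∃ B : Matrix (Fin n) (Fin n) ℝ, Bᵀ * B = 1 ∧ r = frobNorm (A - B)})
    (hρ1 : ρ ≤ 1) :
    (1 / 4) * ρ ^ 2 * (2 - ρ) ^ 2 ≤ acF A ∧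
    ∀ v : Fin n → ℝ, (∑ i, v i ^ 2) = 1 →
      acF (1 - ρ • vecMulVec v v) = (1 / 4) * ρ ^ 2 * (2 - ρ) ^ 2 := by
  have hnn : ∀ r ∈ {r : ℝ | ∃ B : Matrix (Fin n) (Fin n) ℝ, Bᵀ * B = 1 ∧ r = frobNorm (A - B)},
      0 ≤ r := by
    rintro r ⟨B, -, rfl⟩
    exact Real.sqrt_nonneg _
  have h0 : 0 ≤ ρ := hρ ▸ Real.sInf_nonneg hnn
  constructor
  · obtain ⟨U, V, d, hU, hV, hd, hAV⟩ := exists_svd A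
    have hV' : V * Vᵀ = 1 := mul_eq_one_comm.1 hV
    have hle : ρ ≤ frobNorm (A - U * Vᵀ) := by
      rw [hρ]
      refine csInf_le ⟨0, hnn⟩ ⟨U * Vᵀ, ?_, rfl⟩
      rw [transpose_mul, transpose_transpose, Matrix.mul_assoc, ← Matrix.mul_assoc Uᵀ, hU,
        Matrix.one_mul, hV']
    have hdist : frobNorm (A - U * Vᵀ) ^ 2 = ∑ i, (d i - 1) ^ 2 := by
      have : (A - U * Vᵀ) * V = U * diagonal fun i => d i - 1 := by
        rw [Matrix.sub_mul, hAV, Matrix.mul_assoc, hV, ← Matrix.mul_sub, ← diagonal_one,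
          diagonal_sub]
      rw [← frobNorm_sq_mul_orthogonal _ V hV', this, frobNorm_sq_orthogonal_mul _ _ hU,
        frobNorm_sq_diagonal]
    have hF : frobNorm (Aᵀ * A - 1) ^ 2 = ∑ i, (d i ^ 2 - 1) ^ 2 := by
      have : Vᵀ * ((Aᵀ * A - 1) * V) = diagonal fun i => d i ^ 2 - 1 := by
        calc Vᵀ * ((Aᵀ * A - 1) * V) = (A * V)ᵀ * (A * V) - Vᵀ * V := by
              simp only [transpose_mul, Matrix.mul_assoc, Matrix.sub_mul, Matrix.mul_sub,
                Matrix.one_mul]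
          _ = diagonal d * (Uᵀ * U) * diagonal d - 1 := by
              rw [hAV, hV, transpose_mul, diagonal_transpose]
              simp only [Matrix.mul_assoc]
          _ = _ := by
              rw [hU, Matrix.mul_one, diagonal_mul_diagonal, ← diagonal_one, diagonal_sub]
              simp only [sq]
      rw [← frobNorm_sq_mul_orthogonal _ V hV',
        ← frobNorm_sq_orthogonal_mul Vᵀ _ (by rwa [transpose_transpose]), this,
        frobNorm_sq_diagonal]
    have := sum_sq_bound d hd ρ h0 hρ1 (by rw [← hdist]; gcongr)
    rw [acF, hF]
    linarith
  · intro v hv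
    have hvv : v ⬝ᵥ v = 1 := by rw [← hv]; simp [dotProduct, sq]
    have hP : vecMulVec v v * vecMulVec v v = vecMulVec v v := by
      rw [vecMulVec_mul_vecMulVec, hvv, one_smul]
    have hPt : (vecMulVec v v)ᵀ = vecMulVec v v := transpose_vecMulVec v v
    have hm : (1 - ρ • vecMulVec v v)ᵀ * (1 - ρ • vecMulVec v v) - 1
        = (ρ ^ 2 - 2 * ρ) • vecMulVec v v := by
      rw [transpose_sub, transpose_smul, hPt, transpose_one, Matrix.sub_mul, Matrix.mul_sub,
        Matrix.mul_sub, smul_mul_smul_comm, hP, Matrix.one_mul, Matrix.one_mul, Matrix.mul_one]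
      module
    rw [acF, hm, frobNorm_sq_eq_trace, transpose_smul, hPt, smul_mul_smul_comm, hP, trace_smul,
      trace_vecMulVec, hvv, smul_eq_mul]
    ring
end

section
/- Let n ≥ 1 and let A₊ ∈ O⁺(n), A₋ ∈ O⁻(n) be such that A₊ᵀA₋ is a symmetric matrix. Then the matrix-valued function Θ(z) = s(z)A₊ + (1 − s(z))A₋ satisfies the connecting-orbit ODE Θ″(z) = Θ(z)Θ(z)ᵀΘ(z) − Θ(z) for every z ∈ ℝ, and Θ(z) → A₊ as z → +∞, Θ(z) → A₋ as z → −∞. -/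
/-!
The profile `s = sAC` satisfies the logistic equation `s′ = √2 s(1 − s)`, hence
`s″ = 2s(1 − s)(1 − 2s)`. Since `A₊ᵀA₋` is symmetric and both matrices are orthogonal,
`A₊A₋ᵀA₊ = A₋` and `A₋A₊ᵀA₋ = A₊`. Every cubic monomial in the expansion of `ΘΘᵀΘ` therefore
collapses to `A₊` or `A₋`, according to the parity of the number of factors `A₋`: with `t = 1 − s`,
`ΘΘᵀΘ = (s³ + 3st²)A₊ + (t³ + 3s²t)A₋`, so that
`ΘΘᵀΘ − Θ = 2s(1 − s)(1 − 2s)(A₊ − A₋) = s″(A₊ − A₋) = Θ″`.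
The limits follow from `s → 1` at `+∞` and `s → 0` at `−∞`.
-/

open Matrix Filter

/-- The standard one-dimensional Allen–Cahn transition profile. -/
noncomputable def sAC (z : ℝ) : ℝ := 1 - (1 + Real.exp (Real.sqrt 2 * z))⁻¹

/-- The profile solves the logistic equation `s′ = √2 s(1 − s)`. -/
lemma hasDerivAt_sAC (z : ℝ) :
    HasDerivAt sAC (Real.sqrt 2 * (sAC z * (1 - sAC z))) z := by
  have hpos : (1 + Real.exp (Real.sqrt 2 * z)) ≠ 0 := by positivity
  have h1 : HasDerivAt (fun z : ℝ => Real.sqrt 2 * z) (Real.sqrt 2) z := by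
    simpa using (hasDerivAt_id z).const_mul (Real.sqrt 2)
  have h := ((h1.exp.const_add 1).fun_inv hpos).const_sub 1
  refine h.congr_deriv ?_
  unfold sAC
  field_simp
  ring

lemma hasDerivAt_deriv_sAC (z : ℝ) :
    HasDerivAt (fun y => Real.sqrt 2 * (sAC y * (1 - sAC y)))
      (2 * sAC z * (1 - sAC z) * (1 - 2 * sAC z)) z := by
  have h := hasDerivAt_sAC z
  refine ((h.fun_mul (h.const_sub 1)).const_mul (Real.sqrt 2)).congr_deriv ?_
  have h2 : Real.sqrt 2 * Real.sqrt 2 = 2 := Real.mul_self_sqrt (by norm_num)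
  linear_combination (sAC z * (1 - sAC z) * (1 - 2 * sAC z)) * h2

lemma tendsto_sAC_atTop : Tendsto sAC atTop (nhds 1) := by
  have h : Tendsto (fun z : ℝ => Real.sqrt 2 * z) atTop atTop :=
    tendsto_id.const_mul_atTop (by positivity)
  have h' := tendsto_inv_atTop_zero.comp
    (tendsto_atTop_add_const_left _ (1 : ℝ) (Real.tendsto_exp_atTop.comp h))
  simpa [Function.comp_def,
    show sAC = fun z => 1 - (1 + Real.exp (Real.sqrt 2 * z))⁻¹ from rfl] using h'.const_sub 1

lemma tendsto_sAC_atBot : Tendsto sAC atBot (nhds 0) := by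
  have h : Tendsto (fun z : ℝ => Real.sqrt 2 * z) atBot atBot :=
    tendsto_id.const_mul_atBot (by positivity)
  have h' := ((Real.tendsto_exp_atBot.comp h).const_add 1).inv₀ (by norm_num)
  simpa [Function.comp_def,
    show sAC = fun z => 1 - (1 + Real.exp (Real.sqrt 2 * z))⁻¹ from rfl] using h'.const_sub 1

/-- For orthogonal `P`, `M` with `PᵀM` symmetric, `ΘΘᵀΘ` is again a combination of `P` and `M`. -/
lemma cubic_collapse {n : ℕ} (P M : Matrix (Fin n) (Fin n) ℝ)
    (hP : Pᵀ * P = 1) (hM : Mᵀ * M = 1) (hsym : (Pᵀ * M)ᵀ = Pᵀ * M) (s t : ℝ) :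
    (s • P + t • M) * (s • P + t • M)ᵀ * (s • P + t • M)
      = (s ^ 3 + 3 * s * t ^ 2) • P + (t ^ 3 + 3 * s ^ 2 * t) • M := by
  have hP' : P * Pᵀ = 1 := mul_eq_one_comm.mp hP
  have hM' : M * Mᵀ = 1 := mul_eq_one_comm.mp hM
  have hs : Mᵀ * P = Pᵀ * M := by simpa using hsym
  have e1 : P * (Pᵀ * M) = M := by rw [← Matrix.mul_assoc, hP', Matrix.one_mul]
  have e2 : M * (Pᵀ * M) = P := by rw [← hs, ← Matrix.mul_assoc, hM', Matrix.one_mul]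
  simp only [transpose_add, transpose_smul, Matrix.mul_assoc, Matrix.add_mul, Matrix.mul_add,
    Matrix.smul_mul, Matrix.mul_smul, hP, hM, hs, e1, e2, Matrix.mul_one]
  module

/-- If `A₊ ∈ O⁺(n)`, `A₋ ∈ O⁻(n)` and `A₊ᵀA₋` is symmetric, then
`Θ(z) = s(z)A₊ + (1 − s(z))A₋` satisfies the connecting-orbit ODE
`Θ″ = ΘΘᵀΘ − Θ` and connects `A₋` at `−∞` to `A₊` at `+∞`. -/
theorem stmt3 (n : ℕ) (hn : 1 ≤ n)
    (Ap Am : Matrix (Fin n) (Fin n) ℝ)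
    (hApO : Apᵀ * Ap = 1) (hApdet : Ap.det = 1)
    (hAmO : Amᵀ * Am = 1) (hAmdet : Am.det = -1)
    (hsym : (Apᵀ * Am)ᵀ = Apᵀ * Am)
    (Θ : ℝ → Matrix (Fin n) (Fin n) ℝ)
    (hΘ : ∀ z, Θ z = sAC z • Ap + (1 - sAC z) • Am) :
    (∀ z : ℝ, ∀ i j : Fin n,
      deriv (deriv (fun t => Θ t i j)) z = (Θ z * (Θ z)ᵀ * Θ z - Θ z) i j) ∧
    Tendsto Θ atTop (nhds Ap) ∧ Tendsto Θ atBot (nhds Am) := by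
  refine ⟨fun z i j => ?_, ?_, ?_⟩
  · have hfun : (fun t => Θ t i j) = fun t => sAC t * (Ap i j - Am i j) + Am i j := by
      funext t
      rw [hΘ]
      simp only [Matrix.add_apply, Matrix.smul_apply, smul_eq_mul]
      ring
    have hd : deriv (fun t => Θ t i j) =
        fun t => Real.sqrt 2 * (sAC t * (1 - sAC t)) * (Ap i j - Am i j) := by
      funext t
      rw [hfun]
      exact (((hasDerivAt_sAC t).mul_const _).add_const _).deriv
    rw [hd, ((hasDerivAt_deriv_sAC z).mul_const _).deriv, hΘ,
      cubic_collapse Ap Am hApO hAmO hsym]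
    simp only [Matrix.sub_apply, Matrix.add_apply, Matrix.smul_apply, smul_eq_mul]
    ring
  · rw [funext hΘ]
    simpa using (tendsto_sAC_atTop.smul_const Ap).add
      ((tendsto_sAC_atTop.const_sub 1).smul_const Am)
  · rw [funext hΘ]
    simpa using (tendsto_sAC_atBot.smul_const Ap).add
      ((tendsto_sAC_atBot.const_sub 1).smul_const Am)
end

section
/- Fix a unit vector 𝐧 ∈ ℝⁿ and a real number t, and set P₀ = I − 2t𝐧𝐧ᵀ. For an n×n real matrix B define H_{P₀}(B) = P₀P₀ᵀB + BP₀ᵀP₀ + P₀BᵀP₀ − B. Then: (a) H_{P₀}(λ𝐧𝐧ᵀ) = 2(1 − 6t + 6t²)·λ𝐧𝐧ᵀ for every λ ∈ ℝ; (b) if 𝐥·𝐧 = 0 then H_{P₀}(𝐧𝐥ᵀ + 𝐥𝐧ᵀ) = 2(1−t)(1−2t)·(𝐧𝐥ᵀ + 𝐥𝐧ᵀ); (c) if 𝐥·𝐧 = 0 then H_{P₀}(𝐧𝐥ᵀ − 𝐥𝐧ᵀ) = 2t(2t−1)·(𝐧𝐥ᵀ − 𝐥𝐧ᵀ); (d)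 if W is antisymmetric with W𝐧 = 0 then H_{P₀}(W) = 0; (e) if S is symmetric with S𝐧 = 0 then H_{P₀}(S) = 2S. In particular, for every B ∈ Mₙ(ℝ), H_{P₀}(B):B = Σᵢ₌₁⁵ κᵢ(t)‖𝒫ᵢB‖², where 𝒫ᵢ is the orthogonal projection onto Vᵢ. -/
/-! With `N = 𝐧𝐧ᵀ`, which is symmetric and idempotent, `H_{P₀}` expands into a combination of
`B`, `Bᵀ`, `N * B + B * N`, `N * Bᵀ + Bᵀ * N` and `N * Bᵀ * N` (`Hop_expand`). The
eigenvalue on each `Vᵢ` is read off from this formula, and it also gives `H_{P₀} B = ∑ κᵢ(t) 𝒫ᵢ B`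
for every `B` (`Hop_eq_sum_proj`, where `𝒫₄` is absent because `κ₄ = 0`); as each `𝒫ᵢ` is self-adjoint and idempotent,
`𝒫ᵢ B : B = ‖𝒫ᵢ B‖²`, which yields the quadratic-form identity. -/

open Matrix

noncomputable section

/-- Frobenius inner product of matrices. -/
def finner {n : ℕ} (A B : Matrix (Fin n) (Fin n) ℝ) : ℝ := ∑ i, ∑ j, A i j * B i j

/-- Orthogonal projection onto `V₁ = span{𝐧𝐧ᵀ}`. -/
def proj1 {n : ℕ} (v : Fin n → ℝ) (A : Matrix (Fin n) (Fin n) ℝ) : Matrix (Fin n) (Fin n) ℝ :=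
  finner A (vecMulVec v v) • vecMulVec v v

/-- Orthogonal projection onto `V₂ = {𝐧𝐥ᵀ + 𝐥𝐧ᵀ : 𝐥·𝐧 = 0}`. -/
def proj2 {n : ℕ} (v : Fin n → ℝ) (A : Matrix (Fin n) (Fin n) ℝ) : Matrix (Fin n) (Fin n) ℝ :=
  (1 / 2 : ℝ) • (vecMulVec v v * (A + Aᵀ) * (1 - vecMulVec v v)
    + (1 - vecMulVec v v) * (A + Aᵀ) * vecMulVec v v)

/-- Orthogonal projection onto `V₃ = {𝐧𝐥ᵀ − 𝐥𝐧ᵀ : 𝐥·𝐧 = 0}`. -/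
def proj3 {n : ℕ} (v : Fin n → ℝ) (A : Matrix (Fin n) (Fin n) ℝ) : Matrix (Fin n) (Fin n) ℝ :=
  (1 / 2 : ℝ) • (vecMulVec v v * (A - Aᵀ) * (1 - vecMulVec v v)
    + (1 - vecMulVec v v) * (A - Aᵀ) * vecMulVec v v)

/-- Orthogonal projection onto `V₄` (antisymmetric matrices annihilating `𝐧`). -/
def proj4 {n : ℕ} (v : Fin n → ℝ) (A : Matrix (Fin n) (Fin n) ℝ) : Matrix (Fin n) (Fin n) ℝ :=
  (1 / 2 : ℝ) • ((1 - vecMulVec v v) * (A - Aᵀ) * (1 - vecMulVec v v))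

/-- Orthogonal projection onto `V₅` (symmetric matrices annihilating `𝐧`). -/
def proj5 {n : ℕ} (v : Fin n → ℝ) (A : Matrix (Fin n) (Fin n) ℝ) : Matrix (Fin n) (Fin n) ℝ :=
  (1 / 2 : ℝ) • ((1 - vecMulVec v v) * (A + Aᵀ) * (1 - vecMulVec v v))

/-- The linearized Allen–Cahn operator `H_P(B) = PPᵀB + BPᵀP + PBᵀP − B`. -/
def Hop {n : ℕ} (P B : Matrix (Fin n) (Fin n) ℝ) : Matrix (Fin n) (Fin n) ℝ :=
  P * Pᵀ * B + B * (Pᵀ * P) + P * Bᵀ * P - B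

lemma finner_eq_trace {n : ℕ} (A B : Matrix (Fin n) (Fin n) ℝ) :
    finner A B = (Aᵀ * B).trace := by
  simp only [finner, trace, diag_apply, mul_apply, transpose_apply]
  exact Finset.sum_comm

lemma finner_add_left {n : ℕ} (A B C : Matrix (Fin n) (Fin n) ℝ) :
    finner (A + B) C = finner A C + finner B C := by
  simp [finner_eq_trace, add_mul]

lemma finner_sub_left {n : ℕ} (A B C : Matrix (Fin n) (Fin n) ℝ) :
    finner (A - B) C = finner A C - finner B C := by
  simp [finner_eq_trace, sub_mul]

lemma finner_smul_left {n : ℕ} (c : ℝ) (A B : Matrix (Fin n) (Fin n) ℝ) :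
    finner (c • A) B = c * finner A B := by
  simp [finner_eq_trace]

lemma finner_comm {n : ℕ} (A B : Matrix (Fin n) (Fin n) ℝ) : finner A B = finner B A := by
  simp only [finner, mul_comm]

lemma finner_add_right {n : ℕ} (A B C : Matrix (Fin n) (Fin n) ℝ) :
    finner A (B + C) = finner A B + finner A C := by
  simp [finner_eq_trace, mul_add]

lemma finner_sub_right {n : ℕ} (A B C : Matrix (Fin n) (Fin n) ℝ) :
    finner A (B - C) = finner A B - finner A C := by
  simp [finner_eq_trace, mul_sub]

lemma finner_smul_right {n : ℕ} (c : ℝ) (A B : Matrix (Fin n) (Fin n) ℝ) :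
    finner A (c • B) = c * finner A B := by
  simp [finner_eq_trace]

lemma finner_transpose_left {n : ℕ} (A B : Matrix (Fin n) (Fin n) ℝ) :
    finner Aᵀ B = finner A Bᵀ := by
  simp only [finner, transpose_apply]
  exact Finset.sum_comm

lemma finner_mul_left {n : ℕ} (X A B : Matrix (Fin n) (Fin n) ℝ) :
    finner (X * A) B = finner A (Xᵀ * B) := by
  simp only [finner_eq_trace, transpose_mul, mul_assoc]

lemma finner_mul_right {n : ℕ} (A Y B : Matrix (Fin n) (Fin n) ℝ) :
    finner (A * Y) B = finner A (B * Yᵀ) := by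
  rw [finner_eq_trace, finner_eq_trace, transpose_mul, mul_assoc, trace_mul_comm, mul_assoc]

lemma vecMulVec_self_transpose {n : ℕ} (v : Fin n → ℝ) :
    (vecMulVec v v)ᵀ = vecMulVec v v := by
  simp [transpose_vecMulVec]

lemma vecMulVec_self_mul_self {n : ℕ} {v : Fin n → ℝ} (hv : v ⬝ᵥ v = 1) :
    vecMulVec v v * vecMulVec v v = vecMulVec v v := by
  simp [vecMulVec_mul_vecMulVec, hv]

/-- `N * A * N = (𝐧·A𝐧) N`, so `𝒫₁` is two-sided multiplication by `N`. -/
lemma proj1_eq {n : ℕ} (v : Fin n → ℝ) (A : Matrix (Fin n) (Fin n) ℝ) :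
    proj1 v A = vecMulVec v v * A * vecMulVec v v := by
  have h : finner A (vecMulVec v v) = v ⬝ᵥ A *ᵥ v := by
    simp only [finner, vecMulVec_apply, dotProduct, mulVec, Finset.mul_sum]
    exact Finset.sum_congr rfl fun i _ => Finset.sum_congr rfl fun j _ => by ring
  rw [proj1, h, vecMulVec_mul, vecMulVec_mul_vecMulVec, ← dotProduct_mulVec]
  simp [vecMulVec_smul]

lemma Hop_expand {n : ℕ} {v : Fin n → ℝ} (hv : v ⬝ᵥ v = 1) (t : ℝ)
    (B : Matrix (Fin n) (Fin n) ℝ) :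
    Hop (1 - (2 * t) • vecMulVec v v) B = B + Bᵀ
      - (4 * t - 4 * t ^ 2) • (vecMulVec v v * B + B * vecMulVec v v)
      - (2 * t) • (vecMulVec v v * Bᵀ + Bᵀ * vecMulVec v v)
      + (4 * t ^ 2) • (vecMulVec v v * Bᵀ * vecMulVec v v) := by
  have hN := vecMulVec_self_mul_self hv
  have hT := vecMulVec_self_transpose v
  unfold Hop
  generalize vecMulVec v v = N at *
  simp only [transpose_sub, transpose_smul, transpose_one, hT, sub_mul, mul_sub, one_mul, mul_one,
    smul_mul_assoc, mul_smul_comm, hN, smul_smul, smul_sub]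
  module

/-- On the space spanned by `𝐧𝐥ᵀ` and `𝐥𝐧ᵀ` with `𝐥 ⊥ 𝐧`, the map `X ↦ N * X + X * N` is the
identity and `X ↦ N * X * N` vanishes. -/
lemma Hop_of_mixed {n : ℕ} {v : Fin n → ℝ} (hv : v ⬝ᵥ v = 1) (t : ℝ) (l : Fin n → ℝ)
    (hl : l ⬝ᵥ v = 0) (a b : ℝ) :
    Hop (1 - (2 * t) • vecMulVec v v) (a • vecMulVec v l + b • vecMulVec l v) =
      (1 - (4 * t - 4 * t ^ 2)) • (a • vecMulVec v l + b • vecMulVec l v)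
      + (1 - 2 * t) • (b • vecMulVec v l + a • vecMulVec l v) := by
  have hl' : v ⬝ᵥ l = 0 := by rw [dotProduct_comm, hl]
  rw [Hop_expand hv]
  simp only [transpose_add, transpose_smul, transpose_vecMulVec, mul_add, add_mul,
    mul_smul_comm, smul_mul_assoc, vecMulVec_mul_vecMulVec, hv, hl, hl', one_smul, zero_smul,
    vecMulVec_zero, smul_zero, add_zero, zero_add]
  module

lemma mul_vecMulVec_self_eq_zero {n : ℕ} {v : Fin n → ℝ} {A : Matrix (Fin n) (Fin n) ℝ}
    (h : A *ᵥ v = 0) : A * vecMulVec v v = 0 := by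
  simp [mul_vecMulVec, h]

lemma Hop_eq_sum_proj {n : ℕ} {v : Fin n → ℝ} (hv : v ⬝ᵥ v = 1) (t : ℝ)
    (B : Matrix (Fin n) (Fin n) ℝ) :
    Hop (1 - (2 * t) • vecMulVec v v) B =
      (2 * (1 - 6 * t + 6 * t ^ 2)) • proj1 v B
        + (2 * (1 - t) * (1 - 2 * t)) • proj2 v B
        + (2 * t * (2 * t - 1)) • proj3 v B
        + (2 : ℝ) • proj5 v B := by
  -- Both sides are the same multiple `𝐧·B𝐧` of `N = 𝐧𝐧ᵀ`.
  have hs : vecMulVec v v * Bᵀ * vecMulVec v v = vecMulVec v v * B * vecMulVec v v := by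
    rw [← proj1_eq, ← proj1_eq, proj1, proj1, finner_transpose_left, vecMulVec_self_transpose]
  rw [Hop_expand hv, proj1_eq]
  unfold proj2 proj3 proj5
  generalize vecMulVec v v = N at *
  simp only [sub_mul, mul_sub, add_mul, mul_add, one_mul, mul_one, hs]
  module

/-- A self-adjoint idempotent satisfies `p A : A = ‖p A‖²`. -/
lemma finner_self_of_proj {n : ℕ} (p : Matrix (Fin n) (Fin n) ℝ → Matrix (Fin n) (Fin n) ℝ)
    (hsa : ∀ A B, finner (p A) B = finner A (p B)) (hid : ∀ A, p (p A) = p A)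
    (A : Matrix (Fin n) (Fin n) ℝ) : finner (p A) A = finner (p A) (p A) := by
  rw [hsa A (p A), hid, finner_comm]

section Projections

variable {n : ℕ} {v : Fin n → ℝ}

lemma proj1_self (hv : v ⬝ᵥ v = 1) (A : Matrix (Fin n) (Fin n) ℝ) :
    finner (proj1 v A) A = finner (proj1 v A) (proj1 v A) := by
  have hN := vecMulVec_self_mul_self hv
  have hT := vecMulVec_self_transpose v
  refine finner_self_of_proj (proj1 v) (fun A B => ?_) (fun A => ?_) A
  · simp only [proj1_eq, finner_mul_right _ (vecMulVec v v), finner_mul_left (vecMulVec v v), hT,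
      mul_assoc]
  · simp only [proj1_eq, mul_assoc, hN]
    simp only [← mul_assoc, hN]

lemma proj2_self (hv : v ⬝ᵥ v = 1) (A : Matrix (Fin n) (Fin n) ℝ) :
    finner (proj2 v A) A = finner (proj2 v A) (proj2 v A) := by
  have hN := vecMulVec_self_mul_self hv
  have hT := vecMulVec_self_transpose v
  have hN' (X : Matrix (Fin n) (Fin n) ℝ) :
      vecMulVec v v * (vecMulVec v v * X) = vecMulVec v v * X := by rw [← mul_assoc, hN]
  refine finner_self_of_proj (proj2 v) (fun A B => ?_) (fun A => ?_) A
  · simp only [proj2, finner_smul_left, finner_smul_right, finner_add_left, finner_add_right,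
      finner_sub_left, finner_sub_right, mul_add, add_mul, mul_sub, sub_mul, one_mul, mul_one,
      mul_assoc, finner_mul_left (vecMulVec v v), finner_mul_right _ (vecMulVec v v), hT,
      finner_transpose_left, transpose_mul]
    ring
  · simp only [proj2, transpose_smul, transpose_mul, transpose_sub, transpose_add,
      transpose_transpose, hT, mul_add, add_mul, mul_sub, sub_mul, one_mul, mul_one,
      mul_smul_comm, smul_mul_assoc, mul_assoc, hN, hN']
    module

lemma proj3_self (hv : v ⬝ᵥ v = 1) (A : Matrix (Fin n) (Fin n) ℝ) :
    finner (proj3 v A) A = finner (proj3 v A) (proj3 v A) := by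
  have hN := vecMulVec_self_mul_self hv
  have hT := vecMulVec_self_transpose v
  have hN' (X : Matrix (Fin n) (Fin n) ℝ) :
      vecMulVec v v * (vecMulVec v v * X) = vecMulVec v v * X := by rw [← mul_assoc, hN]
  refine finner_self_of_proj (proj3 v) (fun A B => ?_) (fun A => ?_) A
  · simp only [proj3, finner_smul_left, finner_smul_right, finner_add_left, finner_add_right,
      finner_sub_left, finner_sub_right, mul_add, mul_sub, sub_mul, one_mul, mul_one,
      mul_assoc, finner_mul_left (vecMulVec v v), finner_mul_right _ (vecMulVec v v), hT,
      finner_transpose_left, transpose_mul]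
    ring
  · simp only [proj3, transpose_smul, transpose_mul, transpose_sub, transpose_add,
      transpose_transpose, hT, mul_add, add_mul, mul_sub, sub_mul, one_mul, mul_one,
      mul_smul_comm, smul_mul_assoc, mul_assoc, hN, hN']
    module

lemma proj5_self (hv : v ⬝ᵥ v = 1) (A : Matrix (Fin n) (Fin n) ℝ) :
    finner (proj5 v A) A = finner (proj5 v A) (proj5 v A) := by
  have hN := vecMulVec_self_mul_self hv
  have hT := vecMulVec_self_transpose v
  have hN' (X : Matrix (Fin n) (Fin n) ℝ) :
      vecMulVec v v * (vecMulVec v v * X) = vecMulVec v v * X := by rw [← mul_assoc, hN]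
  refine finner_self_of_proj (proj5 v) (fun A B => ?_) (fun A => ?_) A
  · simp only [proj5, finner_smul_left, finner_smul_right, finner_add_left, finner_add_right,
      finner_sub_left, finner_sub_right, mul_add, add_mul, mul_sub, sub_mul, one_mul, mul_one,
      mul_assoc, finner_mul_left (vecMulVec v v), finner_mul_right _ (vecMulVec v v), hT,
      finner_transpose_left, transpose_mul]
    ring
  · simp only [proj5, transpose_smul, transpose_mul, transpose_sub, transpose_add,
      transpose_transpose, hT, mul_add, add_mul, mul_sub, sub_mul, one_mul, mul_one,
      mul_smul_comm, smul_mul_assoc, mul_assoc, hN, hN']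
    module

end Projections

/-- Diagonalization of the linearized operator `H_{P₀}` with `P₀ = I − 2t𝐧𝐧ᵀ` on the
orthogonal decomposition `Mₙ = V₁ ⊕ ⋯ ⊕ V₅`, together with the resulting quadratic-form
identity `H_{P₀}B : B = Σᵢ κᵢ(t)‖𝒫ᵢB‖²`. -/
theorem stmt4 (n : ℕ) (v : Fin n → ℝ) (hv : (∑ i, v i ^ 2) = 1) (t : ℝ)
    (P₀ : Matrix (Fin n) (Fin n) ℝ) (hP₀ : P₀ = 1 - (2 * t) • vecMulVec v v) :
    (∀ lam : ℝ,
      Hop P₀ (lam • vecMulVec v v) = (2 * (1 - 6 * t + 6 * t ^ 2)) • (lam • vecMulVec v v)) ∧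
    (∀ l : Fin n → ℝ, l ⬝ᵥ v = 0 →
      Hop P₀ (vecMulVec v l + vecMulVec l v)
        = (2 * (1 - t) * (1 - 2 * t)) • (vecMulVec v l + vecMulVec l v)) ∧
    (∀ l : Fin n → ℝ, l ⬝ᵥ v = 0 →
      Hop P₀ (vecMulVec v l - vecMulVec l v)
        = (2 * t * (2 * t - 1)) • (vecMulVec v l - vecMulVec l v)) ∧
    (∀ W : Matrix (Fin n) (Fin n) ℝ, Wᵀ = -W → W.mulVec v = 0 → Hop P₀ W = 0) ∧
    (∀ S : Matrix (Fin n) (Fin n) ℝ, Sᵀ = S → S.mulVec v = 0 → Hop P₀ S = (2 : ℝ) • S) ∧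
    (∀ B : Matrix (Fin n) (Fin n) ℝ,
      finner (Hop P₀ B) B =
        (2 * (1 - 6 * t + 6 * t ^ 2)) * finner (proj1 v B) (proj1 v B)
          + (2 * (1 - t) * (1 - 2 * t)) * finner (proj2 v B) (proj2 v B)
          + (2 * t * (2 * t - 1)) * finner (proj3 v B) (proj3 v B)
          + 0 * finner (proj4 v B) (proj4 v B)
          + 2 * finner (proj5 v B) (proj5 v B)) := by
  have hv' : v ⬝ᵥ v = 1 := by simpa [dotProduct, sq] using hv
  have hN := vecMulVec_self_mul_self hv'
  have hT := vecMulVec_self_transpose v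
  subst hP₀
  refine ⟨fun lam => ?_, fun l hl => ?_, fun l hl => ?_, fun W hW hWv => ?_, fun S hS hSv => ?_,
    fun B => ?_⟩
  · rw [Hop_expand hv']
    simp only [transpose_smul, hT, mul_smul_comm, smul_mul_assoc, hN]
    module
  · have h := Hop_of_mixed hv' t l hl 1 1
    simp only [one_smul] at h
    rw [h]
    module
  · have h := Hop_of_mixed hv' t l hl 1 (-1)
    rw [show vecMulVec v l - vecMulVec l v
      = (1 : ℝ) • vecMulVec v l + (-1 : ℝ) • vecMulVec l v by module, h]
    module
  · have hr := mul_vecMulVec_self_eq_zero hWv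
    have hl : vecMulVec v v * W = 0 := by
      have := congrArg transpose hr
      simpa [transpose_mul, hT, hW] using this
    rw [Hop_expand hv', hW]
    simp [hl, hr]
  · have hr := mul_vecMulVec_self_eq_zero hSv
    have hl : vecMulVec v v * S = 0 := by
      have := congrArg transpose hr
      simpa [transpose_mul, hT, hS] using this
    rw [Hop_expand hv', hS]
    simp [hl, hr, two_smul]
  · rw [Hop_eq_sum_proj hv']
    simp only [finner_add_left, finner_smul_left]
    rw [proj1_self hv', proj2_self hv', proj3_self hv', proj5_self hv']
    ring
end
end

section
/- For every ν₀ > 0 there exist constants C₀(ν₀) > 0, C₁ > 0 and ε₀ > 0 such that for all 0 < ε ≤ ε₀ the following hold. (1) For every continuously differentiable q̄₂ on [−1,1], setting q₂ = s_ε q̄₂, one has ∫_{−1}^{1} ((q₂′)² + ε⁻²κ₂(s_ε)q₂²) dr ≥ (1/2 − C₁ε⁻¹e^{−√2/ε} − ν₀) ∫_{−1}^{1} s_ε² (q̄₂′)² dr − C₀(ν₀) e^{−√2/ε} ∫_{−1}^{1} s_ε² q̄₂² dr. (2) For every continuously differentiable q̄₃ on [−1,1], setting q₃ = (1 − s_ε)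 q̄₃, one has ∫_{−1}^{1} ((q₃′)² + ε⁻²κ₃(s_ε)q₃²) dr ≥ (1/2 − C₁ε⁻¹e^{−√2/ε} − ν₀) ∫_{−1}^{1} (1−s_ε)² (q̄₃′)² dr − C₀(ν₀) e^{−√2/ε} ∫_{−1}^{1} (1−s_ε)² q̄₃² dr. -/
/-- The rescaled profile `s_ε(r) = s(r/ε)`. -/
noncomputable def sE (ε r : ℝ) : ℝ := sAC (r / ε)

open intervalIntegral in
/-- Cauchy–Schwarz in weighted form, with weight `w⁻²` on one factor. -/
lemma weighted_cauchy_schwarz {a b : ℝ} (hab : a < b) {f w : ℝ → ℝ} (hf : Continuous f)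
    (hw : Continuous w) (hw0 : ∀ x, 0 < w x) :
    (∫ x in a..b, f x) ^ 2 ≤ (∫ x in a..b, (w x) ^ 2) * ∫ x in a..b, ((w x)⁻¹) ^ 2 * (f x) ^ 2 := by
  have hwi : Continuous fun x => (w x)⁻¹ := hw.inv₀ fun x => (hw0 x).ne'
  set J := ∫ x in a..b, f x with hJ
  set K := ∫ x in a..b, (w x) ^ 2 with hK
  set A := ∫ x in a..b, ((w x)⁻¹) ^ 2 * (f x) ^ 2 with hA
  have hKpos : 0 < K :=
    intervalIntegral_pos_of_pos ((hw.pow 2).intervalIntegrable _ _) (fun x => by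
      have := hw0 x; positivity) hab
  have h0 : 0 ≤ ∫ x in a..b, (K * ((w x)⁻¹ * f x) - J * w x) ^ 2 :=
    integral_nonneg hab.le fun x _ => sq_nonneg _
  have h1 : ∫ x in a..b, (K * ((w x)⁻¹ * f x) - J * w x) ^ 2
      = K ^ 2 * A - 2 * K * J * J + J ^ 2 * K := by
    have : ∀ x, (K * ((w x)⁻¹ * f x) - J * w x) ^ 2
        = K ^ 2 * (((w x)⁻¹) ^ 2 * (f x) ^ 2) - 2 * K * J * f x + J ^ 2 * (w x) ^ 2 := by
      intro x
      have := (hw0 x).ne'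
      field_simp
      ring
    simp_rw [this]
    rw [integral_add, integral_sub, integral_const_mul, integral_const_mul, integral_const_mul]
    all_goals exact Continuous.intervalIntegrable (by fun_prop) _ _
  rw [h1] at h0
  have h2 : 0 ≤ K * (K * A - J ^ 2) := by nlinarith
  linarith [nonneg_of_mul_nonneg_right h2 hKpos]

/-- The integral of `S⁻²`, where `S⁻¹ = 1 + e^{-cr}`, multiplied by the size `c e^{-2c}` of the
boundary term at `-1`. -/
lemma weight_integral_le {c : ℝ} (hc : 0 < c) :
    c * Real.exp (-c) ^ 2 * (∫ r in (-1 : ℝ)..1, (1 + Real.exp (-(c * r))) ^ 2)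
      ≤ 1 / 2 + 2 * c * Real.exp (-c) ^ 2 + 2 * Real.exp (-c) := by
  have hd : ∀ x ∈ Set.uIcc (-1 : ℝ) 1, HasDerivAt
      (fun r => r - 2 / c * Real.exp (-(c * r)) - 1 / (2 * c) * Real.exp (-(c * r)) ^ 2)
      ((1 + Real.exp (-(c * x))) ^ 2) x := by
    intro x _
    have he : HasDerivAt (fun r => Real.exp (-(c * r))) (Real.exp (-(c * x)) * -(c * 1)) x :=
      (((hasDerivAt_id x).const_mul c).neg).exp
    refine (((hasDerivAt_id x).sub (he.const_mul (2 / c))).sub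
      ((he.pow 2).const_mul (1 / (2 * c)))).congr_deriv ?_
    field_simp
    ring
  rw [intervalIntegral.integral_eq_sub_of_hasDerivAt hd
    (Continuous.intervalIntegrable (by fun_prop) _ _)]
  have e1 : Real.exp (-(c * -1)) = (Real.exp (-c))⁻¹ := by rw [← Real.exp_neg]; ring_nf
  have e2 : Real.exp (-(c * 1)) = Real.exp (-c) := by ring_nf
  rw [e1, e2]
  have ha : 0 < Real.exp (-c) := Real.exp_pos _
  set a := Real.exp (-c)
  have : c * a ^ 2 * (1 - 2 / c * a - 1 / (2 * c) * a ^ 2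
      - (-1 - 2 / c * a⁻¹ - 1 / (2 * c) * a⁻¹ ^ 2))
      = 1 / 2 + 2 * c * a ^ 2 + 2 * a - (2 * a ^ 3 + a ^ 4 / 2) := by
    field_simp
    ring
  rw [this]
  have : 0 ≤ 2 * a ^ 3 + a ^ 4 / 2 := by positivity
  linarith

open intervalIntegral in
/-- Weighted trace estimate at the endpoint where the weight `S² = (1 + e^{-cr})⁻²` is
exponentially small. -/
lemma weighted_trace {c η : ℝ} (hc : 0 < c) (hη : 0 < η) {q : ℝ → ℝ} (hq : ContDiff ℝ 1 q) :
    c * Real.exp (-c) ^ 2 * q (-1) ^ 2 ≤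
      (1 + η) * (1 / 2 + 2 * c * Real.exp (-c) ^ 2 + 2 * Real.exp (-c)) *
        (∫ r in (-1 : ℝ)..1, ((1 + Real.exp (-(c * r)))⁻¹) ^ 2 * (deriv q r) ^ 2)
      + 4 * (1 + η⁻¹) * Real.exp (-c) *
        (∫ r in (-1 : ℝ)..1, ((1 + Real.exp (-(c * r)))⁻¹) ^ 2 * (q r) ^ 2) := by
  have hqc : Continuous q := hq.continuous
  have hdc : Continuous (deriv q) := hq.continuous_deriv le_rfl
  have hwc : Continuous fun r => 1 + Real.exp (-(c * r)) := by fun_prop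
  have hw0 : ∀ r, 0 < 1 + Real.exp (-(c * r)) := fun r => by positivity
  have hic : Continuous fun r => (1 + Real.exp (-(c * r)))⁻¹ := hwc.inv₀ fun r => (hw0 r).ne'
  have hKle := weight_integral_le hc
  set w : ℝ → ℝ := fun r => 1 + Real.exp (-(c * r)) with hw
  set K := ∫ r in (-1 : ℝ)..1, (w r) ^ 2 with hK
  set A := ∫ r in (-1 : ℝ)..1, ((w r)⁻¹) ^ 2 * (deriv q r) ^ 2 with hA
  set B := ∫ r in (-1 : ℝ)..1, ((w r)⁻¹) ^ 2 * (q r) ^ 2 with hB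
  have ha : 0 < Real.exp (-c) := Real.exp_pos _
  have hca : c * Real.exp (-c) ≤ 1 := by
    have h := Real.add_one_le_exp c
    have h2 : Real.exp c * Real.exp (-c) = 1 := by rw [← Real.exp_add]; simp
    nlinarith
  set a := Real.exp (-c)
  have hA0 : 0 ≤ A := integral_nonneg (by norm_num) fun x _ => by positivity
  have hK0 : 0 ≤ K := integral_nonneg (by norm_num) fun x _ => by positivity
  have hpt : ∀ r ∈ Set.Icc (0 : ℝ) 1,
      q (-1) ^ 2 ≤ (1 + η) * (K * A) + (1 + η⁻¹) * q r ^ 2 := by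
    intro r hr
    have hcs := weighted_cauchy_schwarz (a := -1) (b := r) (by linarith [hr.1]) hdc hwc hw0
    rw [integral_deriv_eq_sub (fun x _ => hq.differentiable one_ne_zero x)
      (hdc.intervalIntegrable _ _)] at hcs
    have hKr : ∫ x in (-1 : ℝ)..r, (w x) ^ 2 ≤ K :=
      integral_mono_interval le_rfl (by linarith [hr.1]) hr.2
        (Filter.Eventually.of_forall fun x => by positivity)
        (Continuous.intervalIntegrable (by fun_prop) _ _)
    have hAr : ∫ x in (-1 : ℝ)..r, ((w x)⁻¹) ^ 2 * (deriv q x) ^ 2 ≤ A :=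
      integral_mono_interval le_rfl (by linarith [hr.1]) hr.2
        (Filter.Eventually.of_forall fun x => by positivity)
        (Continuous.intervalIntegrable (by fun_prop) _ _)
    have hJ : (q r - q (-1)) ^ 2 ≤ K * A :=
      hcs.trans (mul_le_mul hKr hAr
        (integral_nonneg (by linarith [hr.1]) fun x _ => by positivity) hK0)
    have hyoung : q (-1) ^ 2 ≤ (1 + η) * (q r - q (-1)) ^ 2 + (1 + η⁻¹) * q r ^ 2 := by
      have : (1 + η) * (q r - q (-1)) ^ 2 + (1 + η⁻¹) * q r ^ 2 - q (-1) ^ 2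
          = η⁻¹ * (η * (q r - q (-1)) + q r) ^ 2 := by
        field_simp
        ring
      have h0 : 0 ≤ η⁻¹ * (η * (q r - q (-1)) + q r) ^ 2 := by positivity
      linarith
    have : (1 + η) * (q r - q (-1)) ^ 2 ≤ (1 + η) * (K * A) := by gcongr
    linarith
  have hint : q (-1) ^ 2 ≤ (1 + η) * (K * A) + (1 + η⁻¹) * ∫ r in (0 : ℝ)..1, q r ^ 2 := by
    have := integral_mono_on (μ := MeasureTheory.volume) (zero_le_one' ℝ)
      (f := fun _ => q (-1) ^ 2) (g := fun r => (1 + η) * (K * A) + (1 + η⁻¹) * q r ^ 2)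
      (Continuous.intervalIntegrable (by fun_prop) _ _)
      (Continuous.intervalIntegrable (by fun_prop) _ _) hpt
    rw [integral_add (Continuous.intervalIntegrable (by fun_prop) _ _)
      (Continuous.intervalIntegrable (by fun_prop) _ _), integral_const_mul] at this
    simpa using this
  have hBle : ∫ r in (0 : ℝ)..1, q r ^ 2 ≤ 4 * B := by
    have h1 : ∫ r in (0 : ℝ)..1, q r ^ 2 ≤ ∫ r in (0 : ℝ)..1, 4 * (((w r)⁻¹) ^ 2 * (q r) ^ 2) := by
      refine integral_mono_on zero_le_one (Continuous.intervalIntegrable (by fun_prop) _ _)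
        (Continuous.intervalIntegrable (by fun_prop) _ _) fun r hr => ?_
      have he : Real.exp (-(c * r)) ≤ 1 := by
        rw [Real.exp_le_one_iff]
        have := mul_nonneg hc.le hr.1
        linarith
      have hwr : (2 : ℝ)⁻¹ ≤ (w r)⁻¹ := inv_anti₀ (hw0 r) (by simp only [hw]; linarith)
      have : (2 : ℝ)⁻¹ ^ 2 ≤ (w r)⁻¹ ^ 2 := by gcongr
      nlinarith [sq_nonneg (q r)]
    rw [integral_const_mul] at h1
    have h2 : ∫ r in (0 : ℝ)..1, ((w r)⁻¹) ^ 2 * (q r) ^ 2 ≤ B :=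
      integral_mono_interval (by norm_num) (by norm_num) le_rfl
        (Filter.Eventually.of_forall fun x => by positivity)
        (Continuous.intervalIntegrable (by fun_prop) _ _)
    linarith
  have hB0 : 0 ≤ B := integral_nonneg (by norm_num) fun x _ => by positivity
  have hca2 : c * a ^ 2 ≤ a := by nlinarith
  calc c * a ^ 2 * q (-1) ^ 2
      ≤ c * a ^ 2 * ((1 + η) * (K * A) + (1 + η⁻¹) * (4 * B)) := by
        gcongr
        refine hint.trans ?_
        gcongr
    _ = (1 + η) * (c * a ^ 2 * K) * A + 4 * (1 + η⁻¹) * (c * a ^ 2) * B := by ring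
    _ ≤ _ := by gcongr

lemma sE_eq (ε r : ℝ) : sE ε r = (1 + Real.exp (-(Real.sqrt 2 / ε * r)))⁻¹ := by
  have h : Real.sqrt 2 * (r / ε) = Real.sqrt 2 / ε * r := by ring
  unfold sE sAC
  rw [h, Real.exp_neg]
  have := Real.exp_pos (Real.sqrt 2 / ε * r)
  field_simp
  ring

lemma one_sub_sE (ε r : ℝ) : 1 - sE ε r = sE ε (-r) := by
  rw [sE_eq, sE_eq, Real.exp_neg, mul_neg, neg_neg]
  have := Real.exp_pos (Real.sqrt 2 / ε * r)
  field_simp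
  ring

/-- The first-order profile equation `s' = √2 s (1 - s)`, rescaled. -/
lemma hasDerivAt_sE (ε r : ℝ) :
    HasDerivAt (sE ε) (Real.sqrt 2 / ε * (sE ε r * (1 - sE ε r))) r := by
  have hfun : sE ε = fun r => (1 + Real.exp (-(Real.sqrt 2 / ε * r)))⁻¹ := funext (sE_eq ε)
  have he : HasDerivAt (fun r => 1 + Real.exp (-(Real.sqrt 2 / ε * r)))
      (Real.exp (-(Real.sqrt 2 / ε * r)) * -(Real.sqrt 2 / ε * 1)) r :=
    ((((hasDerivAt_id r).const_mul (Real.sqrt 2 / ε)).neg).exp).const_add 1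
  rw [hfun]
  have h0 : 0 < 1 + Real.exp (-(Real.sqrt 2 / ε * r)) := by positivity
  refine (he.inv h0.ne').congr_deriv ?_
  generalize Real.sqrt 2 / ε = c at *
  field_simp
  ring

lemma continuous_sE (ε : ℝ) : Continuous (sE ε) :=
  continuous_iff_continuousAt.2 fun r => (hasDerivAt_sE ε r).continuousAt

open intervalIntegral in
/-- Ground-state substitution: since `s_ε` is annihilated by the rescaled operator, the energy of
`s_ε q` is the weighted Dirichlet energy of `q` plus boundary terms. -/
lemma energy_identity (ε : ℝ) {q : ℝ → ℝ} (hq : ContDiff ℝ 1 q) :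
    ∫ r in (-1 : ℝ)..1, ((deriv (fun x => sE ε x * q x) r) ^ 2
        + (ε ^ 2)⁻¹ * (2 * (1 - sE ε r) * (1 - 2 * sE ε r)) * (sE ε r * q r) ^ 2)
      = (∫ r in (-1 : ℝ)..1, (sE ε r) ^ 2 * (deriv q r) ^ 2)
        + (Real.sqrt 2 / ε * (sE ε 1 ^ 2 * (1 - sE ε 1)) * q 1 ^ 2
          - Real.sqrt 2 / ε * (sE ε (-1) ^ 2 * (1 - sE ε (-1))) * q (-1) ^ 2) := by
  have hqc : Continuous q := hq.continuous
  have hdc : Continuous (deriv q) := hq.continuous_deriv le_rfl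
  have hS : Continuous (sE ε) := continuous_sE ε
  have hdq : ∀ r, HasDerivAt q (deriv q r) r :=
    fun r => (hq.differentiable one_ne_zero r).hasDerivAt
  set c := Real.sqrt 2 / ε with hc
  have hc2 : (ε ^ 2)⁻¹ * 2 = c ^ 2 := by
    rw [hc, div_pow, Real.sq_sqrt (by norm_num)]
    ring
  set G : ℝ → ℝ := fun r =>
    c * ((2 * sE ε r * (c * (sE ε r * (1 - sE ε r)))) * (1 - sE ε r)
      - sE ε r ^ 2 * (c * (sE ε r * (1 - sE ε r)))) * q r ^ 2
      + c * (sE ε r ^ 2 * (1 - sE ε r)) * (2 * q r * deriv q r) with hG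
  have hGc : Continuous G := by fun_prop
  have hbd : ∀ r ∈ Set.uIcc (-1 : ℝ) 1,
      HasDerivAt (fun r => c * (sE ε r ^ 2 * (1 - sE ε r)) * q r ^ 2) (G r) r := by
    intro r _
    have hs := hasDerivAt_sE ε r
    rw [← hc] at hs
    refine ((((hs.pow 2).mul (hs.const_sub 1)).const_mul c).mul ((hdq r).pow 2)).congr_deriv ?_
    simp only [hG, Pi.pow_apply, Pi.mul_apply]
    push_cast
    ring
  have hFTC := integral_eq_sub_of_hasDerivAt hbd (hGc.intervalIntegrable _ _)
  rw [← hFTC, ← integral_add (Continuous.intervalIntegrable (by fun_prop) _ _)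
    (hGc.intervalIntegrable _ _)]
  refine integral_congr fun r _ => ?_
  have hprod : deriv (fun x => sE ε x * q x) r
      = c * (sE ε r * (1 - sE ε r)) * q r + sE ε r * deriv q r :=
    ((hasDerivAt_sE ε r).mul (hdq r)).deriv
  have hk : (ε ^ 2)⁻¹ * (2 * (1 - sE ε r) * (1 - 2 * sE ε r))
      = c ^ 2 * ((1 - sE ε r) * (1 - 2 * sE ε r)) := by
    rw [← hc2]; ring
  simp only [hprod, hk, hG]
  ring

open intervalIntegral in
/-- The first claim, with explicit constants. -/
lemma lower_bound_two {ν₀ ε : ℝ} (hν₀ : 0 < ν₀) (hε : 0 < ε) (hε1 : ε ≤ 1) {q : ℝ → ℝ}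
    (hq : ContDiff ℝ 1 q) :
    (1 / 2 - 5 * (1 + ν₀) * ε⁻¹ * Real.exp (-(Real.sqrt 2) / ε) - ν₀) *
        (∫ r in (-1 : ℝ)..1, (sE ε r) ^ 2 * (deriv q r) ^ 2)
      - 4 * (1 + ν₀⁻¹) * Real.exp (-(Real.sqrt 2) / ε) *
        (∫ r in (-1 : ℝ)..1, (sE ε r) ^ 2 * (q r) ^ 2)
    ≤ ∫ r in (-1 : ℝ)..1,
        ((deriv (fun x => sE ε x * q x) r) ^ 2
          + (ε ^ 2)⁻¹ * (2 * (1 - sE ε r) * (1 - 2 * sE ε r)) * (sE ε r * q r) ^ 2) := by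
  have hc : 0 < Real.sqrt 2 / ε := by positivity
  have htr := weighted_trace hc hν₀ hq
  simp_rw [← sE_eq] at htr
  rw [energy_identity ε hq, neg_div]
  have hs0 : ∀ r, 0 < sE ε r := fun r => by rw [sE_eq]; positivity
  have hs1 : ∀ r, 0 < 1 - sE ε r := fun r => by rw [one_sub_sE]; exact hs0 _
  have hδ : sE ε (-1) ≤ Real.exp (-(Real.sqrt 2 / ε)) := by
    rw [sE_eq, Real.exp_neg (Real.sqrt 2 / ε)]
    have e : -(Real.sqrt 2 / ε * -1) = Real.sqrt 2 / ε := by ring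
    rw [e]
    exact inv_anti₀ (Real.exp_pos _) (by linarith)
  have hcε : Real.sqrt 2 / ε ≤ 3 / 2 * ε⁻¹ := by
    rw [div_eq_mul_inv]
    gcongr
    exact Real.sqrt_le_iff.2 ⟨by norm_num, by norm_num⟩
  have hi1 : 1 ≤ ε⁻¹ := (one_le_inv₀ hε).2 hε1
  have ha1 : Real.exp (-(Real.sqrt 2 / ε)) ≤ 1 := Real.exp_le_one_iff.2 (by linarith)
  have ha0 : 0 < Real.exp (-(Real.sqrt 2 / ε)) := Real.exp_pos _
  set a := Real.exp (-(Real.sqrt 2 / ε))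
  set c := Real.sqrt 2 / ε
  set A := ∫ r in (-1 : ℝ)..1, (sE ε r) ^ 2 * (deriv q r) ^ 2 with hA
  set B := ∫ r in (-1 : ℝ)..1, (sE ε r) ^ 2 * (q r) ^ 2 with hB
  have hA0 : 0 ≤ A := integral_nonneg (by norm_num) fun x _ => by positivity
  have hright : 0 ≤ c * (sE ε 1 ^ 2 * (1 - sE ε 1)) * q 1 ^ 2 := by
    have := hs0 1
    have := hs1 1
    positivity
  have hleft : c * (sE ε (-1) ^ 2 * (1 - sE ε (-1))) * q (-1) ^ 2 ≤ c * a ^ 2 * q (-1) ^ 2 := by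
    have h0 := hs0 (-1)
    have h1 := hs1 (-1)
    have : sE ε (-1) ^ 2 * (1 - sE ε (-1)) ≤ a ^ 2 * 1 := by
      gcongr
      linarith
    rw [mul_one] at this
    gcongr
  have hcoef : (1 + ν₀) * (1 / 2 + 2 * c * a ^ 2 + 2 * a)
      ≤ 1 / 2 + ν₀ + 5 * (1 + ν₀) * ε⁻¹ * a := by
    have h1 : c * a ^ 2 ≤ 3 / 2 * ε⁻¹ * a := by
      have : c * a * a ≤ 3 / 2 * ε⁻¹ * a * 1 := by gcongr
      linarith
    have h2 : a ≤ ε⁻¹ * a := le_mul_of_one_le_left ha0.le hi1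
    have h3 : 1 / 2 + 2 * c * a ^ 2 + 2 * a ≤ 1 / 2 + 5 * ε⁻¹ * a := by linarith
    have h4 := mul_le_mul_of_nonneg_left h3 (by linarith : 0 ≤ 1 + ν₀)
    linarith
  have hcoefA := mul_le_mul_of_nonneg_right hcoef hA0
  linarith

/-- Coercive lower bounds for the operators `ℒ₂`, `ℒ₃` after factoring out the
approximate kernels `s_ε`, `1 − s_ε` (Lemma 7.2). -/
theorem stmt9 (ν₀ : ℝ) (hν₀ : 0 < ν₀) :
    ∃ C₀ > (0 : ℝ), ∃ C₁ > (0 : ℝ), ∃ ε₀ > (0 : ℝ), ∀ ε : ℝ, 0 < ε → ε ≤ ε₀ →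
      (∀ qb : ℝ → ℝ, ContDiff ℝ 1 qb →
        (1 / 2 - C₁ * ε⁻¹ * Real.exp (-(Real.sqrt 2) / ε) - ν₀) *
            (∫ r in (-1 : ℝ)..1, (sE ε r) ^ 2 * (deriv qb r) ^ 2)
          - C₀ * Real.exp (-(Real.sqrt 2) / ε) *
            (∫ r in (-1 : ℝ)..1, (sE ε r) ^ 2 * (qb r) ^ 2)
        ≤ ∫ r in (-1 : ℝ)..1,
            ((deriv (fun x => sE ε x * qb x) r) ^ 2
              + (ε ^ 2)⁻¹ * (2 * (1 - sE ε r) * (1 - 2 * sE ε r)) * (sE ε r * qb r) ^ 2)) ∧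
      (∀ qb : ℝ → ℝ, ContDiff ℝ 1 qb →
        (1 / 2 - C₁ * ε⁻¹ * Real.exp (-(Real.sqrt 2) / ε) - ν₀) *
            (∫ r in (-1 : ℝ)..1, (1 - sE ε r) ^ 2 * (deriv qb r) ^ 2)
          - C₀ * Real.exp (-(Real.sqrt 2) / ε) *
            (∫ r in (-1 : ℝ)..1, (1 - sE ε r) ^ 2 * (qb r) ^ 2)
        ≤ ∫ r in (-1 : ℝ)..1,
            ((deriv (fun x => (1 - sE ε x) * qb x) r) ^ 2
              + (ε ^ 2)⁻¹ * (2 * sE ε r * (2 * sE ε r - 1)) * ((1 - sE ε r) * qb r) ^ 2)) := by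
  refine ⟨4 * (1 + ν₀⁻¹), by positivity, 5 * (1 + ν₀), by positivity, 1, one_pos,
    fun ε hε hε1 => ⟨fun qb hqb => lower_bound_two hν₀ hε hε1 hqb, fun qb hqb => ?_⟩⟩
  -- Apply the first claim to the reflected function and change variables `r ↦ -r`.
  have h := lower_bound_two hν₀ hε hε1 (q := fun x => qb (-x)) (hqb.comp contDiff_neg)
  have hd : ∀ r, deriv (fun x => sE ε x * qb (-x)) r
      = -deriv (fun x => sE ε (-x) * qb x) (-r) := by
    intro r
    rw [← deriv_comp_neg]
    simp only [neg_neg]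
  have hA := intervalIntegral.integral_comp_neg (a := -1) (b := 1)
    (fun r => sE ε (-r) ^ 2 * deriv qb r ^ 2)
  have hB := intervalIntegral.integral_comp_neg (a := -1) (b := 1)
    (fun r => sE ε (-r) ^ 2 * qb r ^ 2)
  have hE := intervalIntegral.integral_comp_neg (a := -1) (b := 1)
    (fun r => deriv (fun x => sE ε (-x) * qb x) r ^ 2
      + (ε ^ 2)⁻¹ * (2 * (1 - sE ε (-r)) * (1 - 2 * sE ε (-r))) * (sE ε (-r) * qb r) ^ 2)
  simp only [neg_neg] at hA hB hE
  simp only [hd, deriv_comp_neg, neg_sq, hA, hB, hE] at h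
  have hκ : ∀ r, 2 * sE ε r * (2 * sE ε r - 1)
      = 2 * (1 - sE ε (-r)) * (1 - 2 * sE ε (-r)) := by
    intro r
    rw [← one_sub_sE]
    ring
  simp only [hκ]
  simp only [one_sub_sE] at h ⊢
  exact h
end

section
/- There exist constants C > 0, C′ > 0 and ε₀ > 0 such that for all 0 < ε ≤ ε₀ the following holds: if q₁ ∈ H¹(−1,1) is decomposed as q₁ = μθ_ε + q̂₁ with μ ∈ ℝ and ∫_{−1}^{1} θ_ε q̂₁ dr = 0, then ∫_{−1}^{1} ((q₁′)² + ε⁻²κ₁(s_ε)q₁²) dr + C′ ε⁻² e^{−2√2/ε} ∫_{−1}^{1} q₁² dr ≥ (C/ε²) ∫_{−1}^{1} q̂₁² dr. -/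
/-- The approximate kernel `θ_ε(r) = √2 s_ε(r)(1 − s_ε(r)) = ε s_ε′(r)` of `ℒ₁`. -/
noncomputable def thetaE (ε r : ℝ) : ℝ := Real.sqrt 2 * sE ε r * (1 - sE ε r)

/-! ### Calculus preliminaries -/

lemma ftc_le {G G' F : ℝ → ℝ} {a b : ℝ} (hab : a ≤ b) (hG : ∀ y, a ≤ y → HasDerivAt G (G' y) y)
    (hF : Continuous F) (hle : ∀ y, a ≤ y → G' y ≤ F y) : G b - G a ≤ ∫ y in a..b, F y :=
  intervalIntegral.sub_le_integral_of_hasDeriv_right_of_le hab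
    (fun y hy => (hG y hy.1).continuousAt.continuousWithinAt)
    (fun y hy => (hG y hy.1.le).hasDerivWithinAt)
    hF.integrableOn_Icc (fun y hy => hle y hy.1.le)

lemma hasDerivAt_tanh' (y : ℝ) : HasDerivAt Real.tanh (1 - Real.tanh y ^ 2) y := by
  have : Real.tanh = fun y => Real.sinh y / Real.cosh y := by
    funext y; exact Real.tanh_eq_sinh_div_cosh y
  rw [this]
  refine ((Real.hasDerivAt_sinh y).div (Real.hasDerivAt_cosh y)
    (Real.cosh_pos y).ne').congr_deriv ?_
  have := (Real.cosh_pos y).ne'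
  field_simp

lemma continuous_sech_sq : Continuous fun y => (Real.cosh y ^ 2)⁻¹ :=
  (Real.continuous_cosh.pow 2).inv₀ fun y => pow_ne_zero 2 (Real.cosh_pos y).ne'

lemma one_sub_tanh_sq (y : ℝ) : 1 - Real.tanh y ^ 2 = (Real.cosh y ^ 2)⁻¹ := by
  have := (Real.cosh_pos y).ne'
  rw [Real.tanh_eq_sinh_div_cosh, div_pow, Real.sinh_sq]
  field_simp
  ring

/-! ### The spectral gap for functions vanishing at the origin -/

/-- Gap on a half line with a Dirichlet condition at `0` and a free end at `Y`, from the
supersolution `u = 1/4 + tanh - tanh²/2` and the multiplier `u'/u`. -/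
lemma halfLine {f : ℝ → ℝ} (hf : ContDiff ℝ 1 f) (h0 : f 0 = 0) {Y : ℝ} (hY : 0 ≤ Y) :
    (1 / 4) * ∫ y in (0 : ℝ)..Y, f y ^ 2 ≤
      ∫ y in (0 : ℝ)..Y, (deriv f y ^ 2 + (4 - 6 * (Real.cosh y ^ 2)⁻¹) * f y ^ 2) := by
  have hfc : Continuous f := hf.continuous
  have hdc : Continuous (deriv f) := hf.continuous_deriv le_rfl
  have hcc := continuous_sech_sq
  have hfd : ∀ y, HasDerivAt f (deriv f y) y := fun y =>
    (hf.differentiable one_ne_zero y).hasDerivAt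
  have ht1 : ∀ y, Real.tanh y ^ 2 < 1 := fun y => by
    have h1 := one_sub_tanh_sq y
    have h2 : 0 < (Real.cosh y ^ 2)⁻¹ := by positivity
    linarith
  have ht0 : ∀ y, 0 ≤ y → 0 ≤ Real.tanh y := fun y hy => by
    rw [Real.tanh_eq_sinh_div_cosh]
    exact div_nonneg (Real.sinh_nonneg_iff.2 hy) (Real.cosh_pos y).le
  have hupos : ∀ y, 0 ≤ y → 0 < 1 / 4 + Real.tanh y - Real.tanh y ^ 2 / 2 := fun y hy => by
    nlinarith [ht1 y, ht0 y hy]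
  have key := ftc_le (a := 0) (b := Y)
    (G := fun y => (1 - Real.tanh y ^ 2) * (1 - Real.tanh y) /
      (1 / 4 + Real.tanh y - Real.tanh y ^ 2 / 2) * f y ^ 2)
    (F := fun y => deriv f y ^ 2 + (4 - 6 * (Real.cosh y ^ 2)⁻¹ - 1 / 4) * f y ^ 2) hY
    (fun y hy => by
      have t' := hasDerivAt_tanh' y
      exact ((((t'.pow 2).const_sub 1).mul (t'.const_sub 1)).div
        ((t'.const_add (1 / 4)).sub ((t'.pow 2).div_const 2)) (hupos y hy).ne').mul
          ((hfd y).pow 2))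
    (by fun_prop)
    (fun y hy => by
      have hu := hupos y hy
      have h0 := ht0 y hy
      have h1 := ht1 y
      rw [← one_sub_tanh_sq y]
      simp only [Pi.pow_apply, Pi.sub_apply, Pi.div_apply, Pi.mul_apply]
      generalize Real.tanh y = t at *
      generalize deriv f y = p
      generalize f y = v
      -- This polynomial in `t = tanh y` is `(V - 1/4) u - u''`.
      have hp : 0 ≤ 7 / 16 - t / 4 - 11 / 8 * t ^ 2 + 4 * t ^ 3 := by
        nlinarith [mul_nonneg h0 (sq_nonneg (t - 1/3)), sq_nonneg (t - 1/3)]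
      set u := 1 / 4 + t - t ^ 2 / 2 with hu'
      have e : p ^ 2 + (4 - 6 * (1 - t ^ 2) - 1 / 4) * v ^ 2 =
        (p - (1 - t ^ 2) * (1 - t) / u * v) ^ 2 + 2 * ((1 - t ^ 2) * (1 - t) / u) * p * v
          + ((4 - 6 * (1 - t ^ 2) - 1 / 4) - ((1 - t ^ 2) * (1 - t) / u) ^ 2) * v ^ 2 := by ring
      rw [e]
      have e2 : (7 / 16 - t / 4 - 11 / 8 * t ^ 2 + 4 * t ^ 3) / u * v ^ 2 =
        ((4 - 6 * (1 - t ^ 2) - 1 / 4) - ((1 - t ^ 2) * (1 - t) / u) ^ 2) * v ^ 2 -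
        ((-(2 * t * (1 - t ^ 2)) * (1 - t) + (1 - t ^ 2) * (-(1 - t ^ 2))) * u -
          (1 - t ^ 2) * (1 - t) * ((1 - t ^ 2) - 2 * t * (1 - t ^ 2) / 2)) / u ^ 2 * v ^ 2 := by
        field_simp
        rw [hu']
        ring
      have e3 : 0 ≤ (7 / 16 - t / 4 - 11 / 8 * t ^ 2 + 4 * t ^ 3) / u * v ^ 2 :=
        mul_nonneg (div_nonneg hp hu.le) (sq_nonneg v)
      have e4 := sq_nonneg (p - (1 - t ^ 2) * (1 - t) / u * v)
      norm_num
      norm_num at e2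
      have e5 : 2 * ((1 - t ^ 2) * (1 - t) / u) * p * v = (1 - t ^ 2) * (1 - t) / u * (2 * v * p) := by ring
      linarith)
  have hpos : 0 ≤ (1 - Real.tanh Y ^ 2) * (1 - Real.tanh Y) /
      (1 / 4 + Real.tanh Y - Real.tanh Y ^ 2 / 2) * f Y ^ 2 := by
    have := ht1 Y
    have : 0 ≤ 1 - Real.tanh Y := by nlinarith
    exact mul_nonneg (div_nonneg (mul_nonneg (by linarith) this) (hupos Y hY).le) (sq_nonneg _)
  have split : ∫ y in (0 : ℝ)..Y, (deriv f y ^ 2 + (4 - 6 * (Real.cosh y ^ 2)⁻¹) * f y ^ 2) =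
      (∫ y in (0 : ℝ)..Y, (deriv f y ^ 2 + (4 - 6 * (Real.cosh y ^ 2)⁻¹ - 1 / 4) * f y ^ 2)) +
      ∫ y in (0 : ℝ)..Y, (1 / 4) * f y ^ 2 := by
    rw [← intervalIntegral.integral_add (Continuous.intervalIntegrable (by fun_prop) _ _)
      (Continuous.intervalIntegrable (by fun_prop) _ _)]
    congr 1; funext y; ring
  rw [split, intervalIntegral.integral_const_mul]
  simp only [h0] at key
  norm_num at key hpos ⊢
  linarith

lemma fullLine {f : ℝ → ℝ} (hf : ContDiff ℝ 1 f) (h0 : f 0 = 0) {Y : ℝ} (hY : 0 ≤ Y) :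
    (1 / 4) * ∫ y in (-Y)..Y, f y ^ 2 ≤
      ∫ y in (-Y)..Y, (deriv f y ^ 2 + (4 - 6 * (Real.cosh y ^ 2)⁻¹) * f y ^ 2) := by
  have hfc : Continuous f := hf.continuous
  have hdc : Continuous (deriv f) := hf.continuous_deriv le_rfl
  have hcc := continuous_sech_sq
  have h1 := halfLine hf h0 hY
  have h2 := halfLine (f := fun y => f (-y)) (hf.comp contDiff_neg) (by simpa using h0) hY
  simp only [deriv_comp_neg, neg_sq] at h2
  have r1 := intervalIntegral.integral_comp_neg (a := 0) (b := Y) (fun y => f y ^ 2)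
  have r2 := intervalIntegral.integral_comp_neg (a := 0) (b := Y)
    (fun y => deriv f y ^ 2 + (4 - 6 * (Real.cosh y ^ 2)⁻¹) * f y ^ 2)
  simp only [Real.cosh_neg, neg_zero] at r1 r2
  rw [r1, r2] at h2
  rw [← intervalIntegral.integral_add_adjacent_intervals (a := -Y) (b := 0) (c := Y)
      (Continuous.intervalIntegrable (by fun_prop) _ _)
      (Continuous.intervalIntegrable (by fun_prop) _ _),
    ← intervalIntegral.integral_add_adjacent_intervals (a := -Y) (b := 0) (c := Y)
      (f := fun y => deriv f y ^ 2 + (4 - 6 * (Real.cosh y ^ 2)⁻¹) * f y ^ 2)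
      (Continuous.intervalIntegrable (by fun_prop) _ _)
      (Continuous.intervalIntegrable (by fun_prop) _ _)]
  linarith

/-! ### The approximate ground state -/

/-- The kernel element `sech²` of the Pöschl–Teller operator corrected by a multiple `δ` of
`cosh² + 1`. The constant `1` is what makes the defect in the eigenvalue equation proportional to
`sech²`, hence bounded by `δ` times the function itself. -/
noncomputable def modGround (δ y : ℝ) : ℝ := (Real.cosh y ^ 2)⁻¹ + δ * (Real.cosh y ^ 2 + 1)

/-- The derivative of `modGround δ`, see `hasDerivAt_modGround`. -/
noncomputable def modGround' (δ y : ℝ) : ℝ :=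
  -(2 * Real.sinh y / Real.cosh y ^ 3) + δ * (2 * Real.cosh y * Real.sinh y)

lemma hasDerivAt_modGround (δ y : ℝ) : HasDerivAt (modGround δ) (modGround' δ y) y := by
  have hc := (Real.cosh_pos y).ne'
  have h := Real.hasDerivAt_cosh y
  refine (((h.pow 2).inv (pow_ne_zero 2 hc)).add
    (((h.pow 2).add_const 1).const_mul δ)).congr_deriv ?_
  simp only [modGround', Pi.pow_apply]
  field_simp
  norm_num
  ring

/-- The equation `φ'' = V φ + 6 δ sech²` for `φ = modGround δ`. -/
lemma hasDerivAt_modGround' (δ y : ℝ) : HasDerivAt (modGround' δ)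
    ((4 - 6 * (Real.cosh y ^ 2)⁻¹) * modGround δ y + 6 * δ * (Real.cosh y ^ 2)⁻¹) y := by
  have hc := (Real.cosh_pos y).ne'
  have h := Real.hasDerivAt_cosh y
  have hs := Real.hasDerivAt_sinh y
  refine (((hs.const_mul 2).div (h.pow 3) (pow_ne_zero 3 hc)).neg.add
    (((h.const_mul 2).mul hs).const_mul δ)).congr_deriv ?_
  simp only [modGround, Pi.pow_apply]
  field_simp
  have := Real.sinh_sq y
  norm_num
  ring_nf
  rw [this]
  ring

lemma cosh_four_integral {Y : ℝ} (hY : 0 ≤ Y) :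
    ∫ y in (-Y)..Y, Real.cosh y ^ 4 ≤ 2 * Real.cosh Y ^ 4 := by
  have := ftc_le (a := -Y) (b := Y) (G := fun y => -(Real.sinh y * Real.cosh y ^ 3))
    (F := fun y => -Real.cosh y ^ 4) (by linarith)
    (fun y _ => ((Real.hasDerivAt_sinh y).mul ((Real.hasDerivAt_cosh y).pow 3)).neg) (by fun_prop)
    (fun y _ => by
      simp only [Pi.pow_apply]
      norm_num
      nlinarith [mul_nonneg (sq_nonneg (Real.sinh y)) (sq_nonneg (Real.cosh y))])
  simp only [Real.sinh_neg, Real.cosh_neg, intervalIntegral.integral_neg] at this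
  have h2 : Real.sinh Y * Real.cosh Y ^ 3 ≤ Real.cosh Y * Real.cosh Y ^ 3 :=
    mul_le_mul_of_nonneg_right (Real.sinh_lt_cosh Y).le (by positivity)
  nlinarith

lemma sech_four_integral {Y : ℝ} (hY : 1 ≤ Y) :
    2 / 3 ≤ ∫ y in (-Y)..Y, ((Real.cosh y ^ 2)⁻¹) ^ 2 := by
  have hcc := continuous_sech_sq
  have := ftc_le (a := -Y) (b := Y) (G := fun y => Real.tanh y - Real.tanh y ^ 3 / 3)
    (F := fun y => ((Real.cosh y ^ 2)⁻¹) ^ 2) (by linarith)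
    (fun y _ => (hasDerivAt_tanh' y).sub (((hasDerivAt_tanh' y).pow 3).div_const 3)) (by fun_prop)
    (fun y _ => by
      rw [← one_sub_tanh_sq]
      norm_num
      apply le_of_eq; ring)
  refine le_trans ?_ this
  simp only [Real.tanh_neg]
  have ht : 1 / 2 ≤ Real.tanh Y := by
    rw [Real.tanh_eq_sinh_div_cosh, le_div_iff₀ (Real.cosh_pos Y), Real.sinh_eq, Real.cosh_eq]
    have h1 := Real.add_one_le_exp Y
    have h2 : Real.exp (-Y) ≤ Real.exp 0 := Real.exp_le_exp.2 (by linarith)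
    have h3 := Real.add_one_le_exp (2*Y)
    have h4 : Real.exp Y = Real.exp (2*Y) * Real.exp (-Y) := by rw [← Real.exp_add]; ring_nf
    have := Real.exp_pos (-Y)
    nlinarith
  have ht1 : Real.tanh Y ^ 2 < 1 := by
    have h1 := one_sub_tanh_sq Y
    have h2 : 0 < (Real.cosh Y ^ 2)⁻¹ := by positivity
    linarith
  nlinarith [mul_pos (lt_of_lt_of_le (by norm_num : (0:ℝ) < 1/2) ht) (sub_pos.2 ht1)]

/-- The value `δ = sech⁴ Y` makes `modGround δ` satisfy the Neumann condition at `Y`. -/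
lemma modGround'_boundary (Y : ℝ) : modGround' (Real.cosh Y ^ 4)⁻¹ Y = 0 := by
  have := (Real.cosh_pos Y).ne'
  rw [modGround']
  field_simp
  ring

/-! ### Coercivity on the stretched interval -/

/-- The estimate in the stretched variable, with the explicit exponentially small parameter
`δ = sech⁴ Y`. -/
lemma coercive {g gh : ℝ → ℝ} {ν Y δ : ℝ} (hY : 1 ≤ Y) (hδ : δ = (Real.cosh Y ^ 4)⁻¹)
    (hδs : δ ≤ 1 / 240) (hg : ContDiff ℝ 1 g)
    (hdec : ∀ y, g y = ν * (Real.cosh y ^ 2)⁻¹ + gh y)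
    (hort : ∫ y in (-Y)..Y, (Real.cosh y ^ 2)⁻¹ * gh y = 0) :
    (1 / 400) * ∫ y in (-Y)..Y, gh y ^ 2 ≤
      (∫ y in (-Y)..Y, (deriv g y ^ 2 + (4 - 6 * (Real.cosh y ^ 2)⁻¹) * g y ^ 2))
        + 25 * δ * ∫ y in (-Y)..Y, g y ^ 2 := by
  have hYY : -Y ≤ Y := by linarith
  have hδ0 : 0 < δ := by
    rw [hδ]
    have := Real.cosh_pos Y
    positivity
  have hgc : Continuous g := hg.continuous
  have hgd : Continuous (deriv g) := hg.continuous_deriv le_rfl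
  have hcc := continuous_sech_sq
  have hghc : Continuous gh := by
    have : gh = fun y => g y - ν * (Real.cosh y ^ 2)⁻¹ := by
      funext y; rw [hdec y]; ring
    rw [this]; fun_prop
  have hθ0 : ∀ y, 0 < (Real.cosh y ^ 2)⁻¹ := fun y => by
    have := Real.cosh_pos y
    positivity
  have hθφ : ∀ y, (Real.cosh y ^ 2)⁻¹ ≤ modGround δ y := fun y => by
    rw [modGround]
    have : 0 ≤ δ * (Real.cosh y ^ 2 + 1) := by positivity
    linarith
  have hφC : ContDiff ℝ 1 (modGround δ) := by
    unfold modGround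
    exact ((Real.contDiff_cosh.pow 2).inv fun y => pow_ne_zero 2 (Real.cosh_pos y).ne').add
      (contDiff_const.mul ((Real.contDiff_cosh.pow 2).add contDiff_const))
  have hφc : Continuous (modGround δ) := hφC.continuous
  obtain ⟨m, hm⟩ : ∃ m, g 0 = m * modGround δ 0 :=
    ⟨g 0 / modGround δ 0, (div_mul_cancel₀ _ ((hθ0 0).trans_le (hθφ 0)).ne').symm⟩
  obtain ⟨f, hf⟩ : ∃ f : ℝ → ℝ, f = fun y => g y - m * modGround δ y := ⟨_, rfl⟩
  have hfy : ∀ y, f y = g y - m * modGround δ y := fun y => by rw [hf]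
  have hfC : ContDiff ℝ 1 f := by
    rw [hf]; exact hg.sub (contDiff_const.mul hφC)
  have hfc : Continuous f := hfC.continuous
  have hfd : Continuous (deriv f) := hfC.continuous_deriv le_rfl
  have hf' : ∀ y, HasDerivAt f (deriv f y) y := fun y =>
    (hfC.differentiable one_ne_zero y).hasDerivAt
  have hfg : ∀ y, deriv g y = deriv f y + m * modGround' δ y := fun y => by
    have h1 := ((hg.differentiable one_ne_zero y).hasDerivAt.sub
      ((hasDerivAt_modGround δ y).const_mul m))
    have h2 : HasDerivAt f (deriv g y - m * modGround' δ y) y := by rw [hf]; exact h1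
    rw [h2.deriv]; ring
  have hfull := fullLine hfC (by rw [hfy, hm]; ring) (by linarith : 0 ≤ Y)
  have ii : ∀ {u : ℝ → ℝ}, Continuous u → IntervalIntegrable u MeasureTheory.volume (-Y) Y :=
    fun h => h.intervalIntegrable _ _
  have hb1 : modGround' δ Y = 0 := by rw [hδ]; exact modGround'_boundary Y
  have hb2 : modGround' δ (-Y) = 0 := by
    rw [← neg_zero, ← hb1]
    simp only [modGround', Real.sinh_neg, Real.cosh_neg]
    ring
  -- Expanding the form at `g = f + m φ`: the cross terms are the derivative of
  -- `(2 m f + m² φ) φ'`, up to errors absorbed in the terms with coefficients `30 δ` and `24 δ`.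
  have hQ := ftc_le (a := -Y) (b := Y)
    (G := fun y => (2 * m * f y + m ^ 2 * modGround δ y) * modGround' δ y)
    (F := fun y => (deriv g y ^ 2 + (4 - 6 * (Real.cosh y ^ 2)⁻¹) * g y ^ 2)
      - (deriv f y ^ 2 + (4 - 6 * (Real.cosh y ^ 2)⁻¹) * f y ^ 2)
      + (30 * δ * f y ^ 2 + 24 * δ * g y ^ 2)) hYY
    (fun y _ => (((hf' y).const_mul (2 * m)).add ((hasDerivAt_modGround δ y).const_mul
      (m ^ 2))).mul (hasDerivAt_modGround' δ y)) (by fun_prop)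
    (fun y _ => by
      have e1 := hfy y
      have e2 := hfg y
      have h1 := hθ0 y
      have h2 := hθφ y
      simp only [Pi.add_apply]
      rw [e2, show g y = f y + m * modGround δ y by rw [e1]; ring]
      generalize f y = a
      generalize deriv f y = a'
      generalize modGround δ y = φ at *
      generalize modGround' δ y = φ'
      generalize (Real.cosh y ^ 2)⁻¹ = θ at *
      have k1 : θ * (2 * m * a + m ^ 2 * φ) ≤ a ^ 2 + 2 * (m * φ) ^ 2 := by
        have l1 : m ^ 2 * (θ * φ) ≤ m ^ 2 * (φ * φ) :=
          mul_le_mul_of_nonneg_left (mul_le_mul_of_nonneg_right h2 (by linarith)) (sq_nonneg m)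
        have l2 : m ^ 2 * (θ * θ) ≤ m ^ 2 * (φ * φ) :=
          mul_le_mul_of_nonneg_left (mul_le_mul h2 h2 h1.le (by linarith)) (sq_nonneg m)
        nlinarith [sq_nonneg (a - m * θ)]
      have k2 : a ^ 2 + 2 * (m * φ) ^ 2 ≤ 5 * a ^ 2 + 4 * (a + m * φ) ^ 2 := by
        nlinarith [sq_nonneg (2 * a + m * φ)]
      have k3 := mul_le_mul_of_nonneg_left (k1.trans k2) (by positivity : 0 ≤ 6 * δ)
      linarith)
  simp only [hb1, hb2, mul_zero, sub_zero] at hQ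
  have hrem : ∫ y in (-Y)..Y, (30 * δ * f y ^ 2 + 24 * δ * g y ^ 2) =
      30 * δ * (∫ y in (-Y)..Y, f y ^ 2) + 24 * δ * ∫ y in (-Y)..Y, g y ^ 2 := by
    rw [intervalIntegral.integral_add (ii (by fun_prop)) (ii (by fun_prop)),
      intervalIntegral.integral_const_mul, intervalIntegral.integral_const_mul]
  rw [intervalIntegral.integral_add (ii (by fun_prop)) (ii (by fun_prop)),
    intervalIntegral.integral_sub (ii (by fun_prop)) (ii (by fun_prop)), hrem] at hQ
  -- Bound on `m`, from `m φ = g - f` and `φ ≥ θ`.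
  have hP : m ^ 2 * (2 / 3) ≤ 2 * (∫ y in (-Y)..Y, f y ^ 2) + 2 * ∫ y in (-Y)..Y, g y ^ 2 := by
    refine (mul_le_mul_of_nonneg_left (sech_four_integral hY) (sq_nonneg m)).trans ?_
    rw [← intervalIntegral.integral_const_mul, ← intervalIntegral.integral_const_mul,
      ← intervalIntegral.integral_const_mul,
      ← intervalIntegral.integral_add (ii (by fun_prop)) (ii (by fun_prop))]
    refine intervalIntegral.integral_mono_on hYY (ii (by fun_prop)) (ii (by fun_prop)) ?_
    intro y _
    have e1 := hfy y
    have l2 := mul_le_mul_of_nonneg_left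
      (mul_le_mul (hθφ y) (hθφ y) (hθ0 y).le ((hθ0 y).le.trans (hθφ y))) (sq_nonneg m)
    have e3 : m ^ 2 * (modGround δ y * modGround δ y) = (g y - f y) ^ 2 := by rw [e1]; ring
    nlinarith [sq_nonneg (g y + f y)]
  -- `gh` is orthogonal to `θ`, so it is no longer than `g - m θ = f + m δ (cosh² + 1)`.
  have hR : ∫ y in (-Y)..Y, gh y ^ 2 ≤ 2 * (∫ y in (-Y)..Y, f y ^ 2)
      + 8 * m ^ 2 * δ ^ 2 * ∫ y in (-Y)..Y, Real.cosh y ^ 4 := by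
    have e : ∫ y in (-Y)..Y, gh y ^ 2 =
        ∫ y in (-Y)..Y, (gh y ^ 2 + 2 * (ν - m) * ((Real.cosh y ^ 2)⁻¹ * gh y)) := by
      rw [intervalIntegral.integral_add (ii (by fun_prop)) (ii (by fun_prop)),
        intervalIntegral.integral_const_mul, hort, mul_zero, add_zero]
    rw [e, ← intervalIntegral.integral_const_mul, ← intervalIntegral.integral_const_mul,
      ← intervalIntegral.integral_add (ii (by fun_prop)) (ii (by fun_prop))]
    refine intervalIntegral.integral_mono_on hYY (ii (by fun_prop)) (ii (by fun_prop)) ?_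
    intro y _
    have e1 : gh y + (ν - m) * (Real.cosh y ^ 2)⁻¹ = f y + m * δ * (Real.cosh y ^ 2 + 1) := by
      rw [hfy, hdec, modGround]; ring
    have l1 : gh y ^ 2 + 2 * (ν - m) * ((Real.cosh y ^ 2)⁻¹ * gh y) ≤
        (f y + m * δ * (Real.cosh y ^ 2 + 1)) ^ 2 := by
      rw [← e1]
      nlinarith [sq_nonneg ((ν - m) * (Real.cosh y ^ 2)⁻¹)]
    have l2 : (Real.cosh y ^ 2 + 1) ^ 2 ≤ 4 * Real.cosh y ^ 4 := by
      nlinarith [Real.one_le_cosh y, one_le_pow₀ (Real.one_le_cosh y) (n := 2)]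
    have l3 := mul_le_mul_of_nonneg_left l2 (sq_nonneg (m * δ))
    nlinarith [sq_nonneg (f y - m * δ * (Real.cosh y ^ 2 + 1))]
  have hK : δ ^ 2 * ∫ y in (-Y)..Y, Real.cosh y ^ 4 ≤ 2 * δ := by
    refine (mul_le_mul_of_nonneg_left (cosh_four_integral (by linarith : 0 ≤ Y))
      (sq_nonneg δ)).trans (le_of_eq ?_)
    have := (Real.cosh_pos Y).ne'
    rw [hδ]
    field_simp
  have hF0 : 0 ≤ ∫ y in (-Y)..Y, f y ^ 2 :=
    intervalIntegral.integral_nonneg hYY fun y _ => sq_nonneg _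
  have hG0 : 0 ≤ ∫ y in (-Y)..Y, g y ^ 2 :=
    intervalIntegral.integral_nonneg hYY fun y _ => sq_nonneg _
  have hK2 := mul_le_mul_of_nonneg_left hK (sq_nonneg m)
  have hP2 := mul_le_mul_of_nonneg_left hP hδ0.le
  have hF1 := mul_le_mul_of_nonneg_right hδs hF0
  have hG1 := mul_nonneg hδ0.le hG0
  nlinarith

/-! ### Return to the original variable -/

lemma sE_mul (ε : ℝ) (hε : 0 < ε) (y : ℝ) :
    sE ε (√2 * ε * y) * (1 - sE ε (√2 * ε * y)) = (1 / 4) * (Real.cosh y ^ 2)⁻¹ := by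
  have h2 : √2 * (√2 * ε * y / ε) = y + y := by
    have := Real.mul_self_sqrt (show (0 : ℝ) ≤ 2 by norm_num)
    field_simp
    linear_combination y * this
  rw [sE, sAC, h2, Real.exp_add, Real.cosh_eq, Real.exp_neg]
  have := Real.exp_pos y
  field_simp
  ring

lemma thetaE_mul (ε : ℝ) (hε : 0 < ε) (y : ℝ) :
    thetaE ε (√2 * ε * y) = √2 / 4 * (Real.cosh y ^ 2)⁻¹ := by
  rw [thetaE, mul_assoc, sE_mul ε hε]
  ring

lemma sech_four_le {Y : ℝ} : (Real.cosh Y ^ 4)⁻¹ ≤ 16 * Real.exp (-(4 * Y)) := by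
  have h1 : Real.exp Y / 2 ≤ Real.cosh Y := by
    rw [Real.cosh_eq]
    linarith [Real.exp_pos (-Y)]
  have h2 : (Real.exp Y / 2) ^ 4 ≤ Real.cosh Y ^ 4 :=
    pow_le_pow_left₀ (by positivity) h1 4
  refine (inv_anti₀ (by positivity) h2).trans (le_of_eq ?_)
  rw [Real.exp_neg, show 4 * Y = Y + Y + Y + Y by ring]
  simp only [Real.exp_add]
  field_simp
  norm_num

/-- Second-eigenvalue-type estimate for `ℒ₁` (Lemma 7.4): if `q₁ = μθ_ε + q̂₁` with
`q̂₁ ⟂ θ_ε` in `L²(−1,1)`, then the quadratic form of `ℒ₁` plus an exponentially small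
multiple of `‖q₁‖²` controls `ε⁻²‖q̂₁‖²`. -/
theorem stmt11 :
    ∃ C > (0 : ℝ), ∃ C' > (0 : ℝ), ∃ ε₀ > (0 : ℝ), ∀ ε : ℝ, 0 < ε → ε ≤ ε₀ →
      ∀ q qh : ℝ → ℝ, ∀ μ : ℝ, ContDiff ℝ 1 q →
        (∀ r, q r = μ * thetaE ε r + qh r) →
        (∫ r in (-1 : ℝ)..1, thetaE ε r * qh r) = 0 →
        (C / ε ^ 2) * ∫ r in (-1 : ℝ)..1, (qh r) ^ 2 ≤
          (∫ r in (-1 : ℝ)..1,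
            ((deriv q r) ^ 2
              + (ε ^ 2)⁻¹ * (2 * (1 - 6 * sE ε r + 6 * (sE ε r) ^ 2)) * (q r) ^ 2))
          + C' * (ε ^ 2)⁻¹ * Real.exp (-(2 * Real.sqrt 2) / ε) *
              ∫ r in (-1 : ℝ)..1, (q r) ^ 2 := by
  refine ⟨1 / 800, by norm_num, 200, by norm_num, 1 / 2000, by norm_num, ?_⟩
  intro ε hε hε0 q qh μ hq hdec hort
  have hs0 : 0 < √2 := by positivity
  have hss := Real.mul_self_sqrt (show (0 : ℝ) ≤ 2 by norm_num)
  have hs2 : √2 ≤ 2 := by nlinarith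
  obtain ⟨l, hl⟩ : ∃ l, l = √2 * ε := ⟨_, rfl⟩
  have hl0 : 0 < l := by rw [hl]; positivity
  have hl1 : l ≤ 1 / 1000 := by rw [hl]; nlinarith
  have hll : l ^ 2 = 2 * ε ^ 2 := by rw [hl]; linear_combination ε ^ 2 * hss
  have hY1 : 1 ≤ 1 / l := by rw [le_div_iff₀ hl0]; linarith
  have resc : ∀ F : ℝ → ℝ, ∫ r in (-1 : ℝ)..1, F r = l * ∫ y in (-(1 / l))..(1 / l), F (l * y) := by
    intro F
    have := intervalIntegral.mul_integral_comp_mul_left (f := F) (a := -(1 / l)) (b := 1 / l) l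
    rw [this, mul_neg, mul_one_div_cancel hl0.ne']
  have hexp : -(2 * √2) / ε = -(4 * (1 / l)) := by
    rw [hl]
    field_simp
    linear_combination -2 * hss
  have hδ := sech_four_le (Y := 1 / l)
  have hδs : (Real.cosh (1 / l) ^ 4)⁻¹ ≤ 1 / 240 := by
    refine hδ.trans ?_
    rw [Real.exp_neg]
    have h1 := Real.add_one_le_exp (4 * (1 / l))
    have h2 : 1000 ≤ 1 / l := by rw [le_div_iff₀ hl0]; linarith
    rw [mul_inv_le_iff₀ (Real.exp_pos _)]
    linarith
  have hgC : ContDiff ℝ 1 fun y => q (l * y) := hq.comp (contDiff_const.mul contDiff_id)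
  have hgd : ∀ y, deriv (fun y => q (l * y)) y = l * deriv q (l * y) := fun y => by
    have := deriv_comp_mul_left l q y
    simpa using this
  have main := coercive (g := fun y => q (l * y)) (gh := fun y => qh (l * y)) (ν := μ * (√2 / 4))
    hY1 rfl hδs hgC
    (fun y => by
      rw [hdec, hl, thetaE_mul ε hε]
      ring)
    (by
      rw [resc] at hort
      have h1 : ∫ y in (-(1 / l))..(1 / l), thetaE ε (l * y) * qh (l * y) = 0 := by
        rcases mul_eq_zero.1 hort with h | h
        · exact absurd h hl0.ne'
        · exact h
      have h2 : ∀ y, (Real.cosh y ^ 2)⁻¹ * qh (l * y) =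
          (√2 / 4)⁻¹ * (thetaE ε (l * y) * qh (l * y)) := fun y => by
        rw [hl, thetaE_mul ε hε]
        field_simp
      simp only [h2]
      rw [intervalIntegral.integral_const_mul, h1, mul_zero])
  have hE : ∫ r in (-1 : ℝ)..1, ((deriv q r) ^ 2
      + (ε ^ 2)⁻¹ * (2 * (1 - 6 * sE ε r + 6 * (sE ε r) ^ 2)) * (q r) ^ 2) =
      l * ((l ^ 2)⁻¹ * ∫ y in (-(1 / l))..(1 / l), (deriv (fun y => q (l * y)) y ^ 2
        + (4 - 6 * (Real.cosh y ^ 2)⁻¹) * q (l * y) ^ 2)) := by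
    rw [resc]
    congr 1
    rw [← intervalIntegral.integral_const_mul]
    congr 1
    funext y
    have hk := sE_mul ε hε y
    rw [← hl] at hk
    have e1 : 2 * (1 - 6 * sE ε (l * y) + 6 * (sE ε (l * y)) ^ 2) =
        (4 - 6 * (Real.cosh y ^ 2)⁻¹) / 2 := by linear_combination -12 * hk
    have e2 : (ε ^ 2)⁻¹ = 2 * (l ^ 2)⁻¹ := by
      rw [hll]
      field_simp
    rw [hgd, e1, e2]
    field_simp
  rw [hE, resc (fun r => qh r ^ 2), resc (fun r => q r ^ 2), hexp]
  have hG0 : 0 ≤ ∫ y in (-(1 / l))..(1 / l), q (l * y) ^ 2 :=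
    intervalIntegral.integral_nonneg (by linarith) fun y _ => sq_nonneg _
  have main2 := main.trans (add_le_add_right (mul_le_mul_of_nonneg_right
    (mul_le_mul_of_nonneg_left hδ (by norm_num : (0 : ℝ) ≤ 25)) hG0) _)
  have main3 := mul_le_mul_of_nonneg_left main2 (by positivity : 0 ≤ l * (l ^ 2)⁻¹)
  have e2 : (ε ^ 2)⁻¹ = 2 * (l ^ 2)⁻¹ := by
    rw [hll]
    field_simp
  rw [div_eq_mul_inv, e2]
  linarith
end
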